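/- arXiv:1110.5369 — 2 statements merged into one kernel-verified Lean document; each statement's English description precedes it below -/
import Mathlib

section
/- Suppose the hyperplanes H_1,…,H_n are pairwise distinct. Let 𝒜' = 𝒜 ∖ {H_1} and let 𝒜'' be the arrangement in the affine subspace H_1 whose hyperplanes are the distinct nonempty intersections H_i ∩ H_1 (2 ≤ i ≤ n, H_i ∩ H_1 ≠ ∅), each defined by the restricted affine map ω_i|_{H_1}. Then for every k ≥ 0, dim_ℚ B(𝒜)_k = dim_ℚ B(𝒜')_k + dim_ℚ B(𝒜'')_{k−1}, where B(−)_k denotes the degree-k graded component (grading by total degree in the generators e_i); equivalently, Poin(B(𝒜)) = Poin(B(𝒜')) + t²·Poin(B(𝒜'')) when each generator is placed in degree 2. -/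
/-!
Statement 5: deletion–restriction recursion for the Poincaré polynomial of `B(𝒜)`.
-/

open MvPolynomial Set

variable {V : Type*} [NormedAddCommGroup V] [NormedSpace ℝ V] [FiniteDimensional ℝ V]

/-- The hyperplane `H i`. -/
def Hyp {n : ℕ} (ω : Fin n → V →ᵃ[ℝ] ℝ) (i : Fin n) : Set V := {v | ω i v = 0}

/-- The open positive half-space `H i⁺`. -/
def Hplus {n : ℕ} (ω : Fin n → V →ᵃ[ℝ] ℝ) (i : Fin n) : Set V := {v | 0 < ω i v}

/-- The open negative half-space `H i⁻`. -/
def Hminus {n : ℕ} (ω : Fin n → V →ᵃ[ℝ] ℝ) (i : Fin n) : Set V := {v | ω i v < 0}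

/-- Family (1) of the Cordovil ideal: `e i ^ 2`. -/
def bFam1 (ι : Type*) : Set (MvPolynomial ι ℚ) := {p | ∃ i : ι, p = X i ^ 2}

/-- Family (2): `∏_{i∈S} e i` whenever `⋂_{i∈S} Z i = ∅`. -/
def bFam2 {ι W : Type*} (Z : ι → Set W) : Set (MvPolynomial ι ℚ) :=
  {p | ∃ S : Finset ι, (⋂ i ∈ S, Z i) = ∅ ∧ p = ∏ i ∈ S, X i}

/-- Family (3): `Σ_{k∈S⁻} (∏_{i∈S⁺} e i · ∏_{j∈S⁻, j≠k} e j) -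
Σ_{k∈S⁺} (∏_{i∈S⁺, i≠k} e i · ∏_{j∈S⁻} e j)` for disjoint `S⁺, S⁻` with
`⋂_{i∈S⁺} Z⁺ i ∩ ⋂_{j∈S⁻} Z⁻ j = ∅` and `⋂_{i∈S⁺∪S⁻} Z i ≠ ∅`. -/
def bFam3 {ι W : Type*} [DecidableEq ι] (Z Zp Zm : ι → Set W) :
    Set (MvPolynomial ι ℚ) :=
  {p | ∃ Sp Sm : Finset ι, Disjoint Sp Sm ∧
    (⋂ i ∈ Sp, Zp i) ∩ (⋂ j ∈ Sm, Zm j) = ∅ ∧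
    (⋂ i ∈ (Sp ∪ Sm : Finset ι), Z i) ≠ ∅ ∧
    p = (∑ k ∈ Sm, ((∏ i ∈ Sp, X i) * ∏ j ∈ Sm.erase k, X j)) -
      ∑ k ∈ Sp, ((∏ i ∈ Sp.erase k, X i) * ∏ j ∈ Sm, X j)}

/-- The ideal `𝓘₀` defining the algebra `B(𝒜)`; the arrangement is recorded through its
hyperplanes `Z i` and open half-spaces `Zp i`, `Zm i`. -/
noncomputable def bIdeal {ι W : Type*} [DecidableEq ι] (Z Zp Zm : ι → Set W) :
    Ideal (MvPolynomial ι ℚ) :=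
  Ideal.span (bFam1 ι ∪ bFam2 Z ∪ bFam3 Z Zp Zm)

/-- The algebra `B(𝒜) = ℚ[e_H : H ∈ 𝒜] / 𝓘₀`. -/
abbrev BAlg {ι W : Type*} [DecidableEq ι] (Z Zp Zm : ι → Set W) :=
  MvPolynomial ι ℚ ⧸ bIdeal Z Zp Zm

/-- The degree-`k` graded component of `B(𝒜)` (grading by total degree in the
generators): the image of the homogeneous polynomials of degree `k`. -/
noncomputable def bGrade {ι W : Type*} [DecidableEq ι] (Z Zp Zm : ι → Set W) (k : ℕ) :
    Submodule ℚ (BAlg Z Zp Zm) :=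
  Submodule.map (Ideal.Quotient.mkₐ ℚ (bIdeal Z Zp Zm)).toLinearMap
    (MvPolynomial.homogeneousSubmodule ι ℚ k)

/-- The index type of the restricted arrangement `𝒜'' = 𝒜^{H₁}`: the distinct nonempty
intersections `H i ∩ H 0` for `i ≠ 0`. -/
def restIdx {n : ℕ} (ω : Fin (n + 1) → V →ᵃ[ℝ] ℝ) : Type _ :=
  {s : Set V // s.Nonempty ∧ ∃ i : Fin (n + 1), i ≠ 0 ∧ s = Hyp ω i ∩ Hyp ω 0}

noncomputable instance {n : ℕ} (ω : Fin (n + 1) → V →ᵃ[ℝ] ℝ) :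
    DecidableEq (restIdx ω) := Classical.decEq _

/-!
The sign vectors of the points of an affine arrangement form a conditional oriented matroid `L`
(COM): they are closed under face symmetry and strong elimination. The ideal `𝓘₀`, deletion and
restriction only depend on `L`, so the recursion is proved for covector sets of COMs.

Modulo the image of `B(𝒜')`, multiplication by `e_{i₀}` is a well-defined surjection from
`B(𝒜'')`, shifted by one, onto `B(𝒜)`. Hence the Hilbert function of `B(𝒜)` is at most the sum of
that of `B(𝒜')` and the shift of that of `B(𝒜'')`. The number of chambers satisfies the same
recursion, so by induction the total dimension of `B(𝒜)` is at most the number of chambers.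

Conversely, sending `e_i` to the indicator function of the positive side of `H_i` filters the
algebra of functions on the chambers by degree (Varchenko–Gelfand). The defining relations of
`B(𝒜)` are leading forms of relations between these indicator functions, so the total dimension of
`B(𝒜)` is at least the number of chambers. All inequalities are therefore equalities, degree by
degree.
-/

/-! ### Dimensions of quotients of polynomial rings -/

lemma finrank_sup_map_le {K P Q R : Type*} [Field K] [AddCommGroup P] [Module K P]
    [AddCommGroup Q] [Module K Q] [AddCommGroup R] [Module K R] (π : P →ₗ[K] Q) (T : P →ₗ[K] R)
    {N : Submodule K P} (hN : N.FG) (W : Submodule K R) [FiniteDimensional K W]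
    (h : ∀ u ∈ N, π u = 0 → T u ∈ W) :
    Module.finrank K ↥(W ⊔ N.map T) ≤ Module.finrank K W + Module.finrank K (N.map π) := by
  have : Module.Finite K N := Module.Finite.of_fg hN
  obtain ⟨s, hs⟩ := (π.submoduleMap N).exists_rightInverse_of_surjective
    (LinearMap.range_eq_top.2 (π.submoduleMap_surjective N))
  have hle : W ⊔ N.map T ≤ W ⊔ (T ∘ₗ N.subtype ∘ₗ s).range := by
    refine sup_le le_sup_left ?_
    rintro _ ⟨u, hu, rfl⟩
    set u' := s (π.submoduleMap N ⟨u, hu⟩)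
    have hu' : π u' = π u := congrArg Subtype.val (LinearMap.congr_fun hs _)
    rw [← sub_add_cancel (T u) (T u'), ← map_sub]
    exact add_mem
      (Submodule.mem_sup_left (h _ (N.sub_mem hu u'.2) (by rw [map_sub, hu', sub_self])))
      (Submodule.mem_sup_right ⟨_, rfl⟩)
  calc Module.finrank K ↥(W ⊔ N.map T)
      ≤ Module.finrank K ↥(W ⊔ (T ∘ₗ N.subtype ∘ₗ s).range) := Submodule.finrank_mono hle
    _ ≤ Module.finrank K W + Module.finrank K (T ∘ₗ N.subtype ∘ₗ s).range :=
        Submodule.finrank_add_le_finrank_add_finrank _ _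
    _ ≤ _ := by gcongr; exact LinearMap.finrank_range_le _

section DegLT

variable {σ R A : Type*} [CommRing R] [CommRing A] [Algebra R A]

/-- The polynomials all of whose monomials have degree less than `k`: the degree filtration. -/
noncomputable def degreeLTSubmodule (σ R : Type*) [CommRing R] (k : ℕ) :
    Submodule R (MvPolynomial σ R) :=
  restrictSupport R {n | n.degree < k}

lemma degreeLTSubmodule_mono : Monotone (degreeLTSubmodule σ R) := fun _ _ h =>
  restrictSupport_mono R fun _ hn => lt_of_lt_of_le hn h

lemma degreeLTSubmodule_zero : degreeLTSubmodule σ R 0 = ⊥ := by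
  refine eq_bot_iff.2 fun f hf => ?_
  rw [Submodule.mem_bot, ← support_eq_empty, Finset.eq_empty_iff_forall_notMem]
  exact fun n hn => Nat.not_lt_zero _ (hf hn)

lemma degreeLTSubmodule_succ (k : ℕ) :
    degreeLTSubmodule σ R (k + 1) = degreeLTSubmodule σ R k ⊔ homogeneousSubmodule σ R k := by
  have : {n : σ →₀ ℕ | n.degree < k + 1} = {n | n.degree < k} ∪ {n | n.degree = k} := by
    ext n
    exact Nat.lt_succ_iff_lt_or_eq
  rw [homogeneousSubmodule_eq_finsupp_supported, degreeLTSubmodule, degreeLTSubmodule, this,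
    restrictSupport_eq_span, restrictSupport_eq_span, image_union, Submodule.span_union,
    ← restrictSupport_eq_span, ← restrictSupport_eq_span]
  rfl

lemma mem_degreeLTSubmodule_of_isHomogeneous {f : MvPolynomial σ R} {e k : ℕ}
    (hf : f.IsHomogeneous e) (h : e < k) : f ∈ degreeLTSubmodule σ R k :=
  degreeLTSubmodule_mono (Nat.succ_le_of_lt h)
    (degreeLTSubmodule_succ (R := R) e ▸ Submodule.mem_sup_right hf)

lemma mul_mem_degreeLTSubmodule {f g : MvPolynomial σ R} {e k : ℕ} (hf : f.IsHomogeneous e)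
    (hg : g ∈ degreeLTSubmodule σ R k) : f * g ∈ degreeLTSubmodule σ R (e + k) := by
  have hfg := Submodule.mul_mem_mul
    (show f ∈ restrictSupport R {n | n.degree = e} by
      rwa [← mem_homogeneousSubmodule, homogeneousSubmodule_eq_finsupp_supported] at hf) hg
  rw [degreeLTSubmodule, ← restrictSupport_add] at hfg
  refine restrictSupport_mono R ?_ hfg
  rintro _ ⟨m, rfl, n, hn, rfl⟩
  simpa using hn

section

attribute [local instance] MvPolynomial.gradedAlgebra

lemma homogeneousComponent_mul_of_isHomogeneous {f : MvPolynomial σ R} {e : ℕ}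
    (hf : f.IsHomogeneous e) (g : MvPolynomial σ R) (k : ℕ) :
    homogeneousComponent k (f * g) = if e ≤ k then f * homogeneousComponent (k - e) g else 0 := by
  have hdec (p : MvPolynomial σ R) (n : ℕ) :
      (DirectSum.decompose (homogeneousSubmodule σ R) p n : MvPolynomial σ R) =
        homogeneousComponent n p := decomposition.decompose'_apply p n
  rw [← hdec, ← hdec]
  exact DirectSum.coe_decompose_mul_of_left_mem (homogeneousSubmodule σ R) k hf

end

/-- The ideal of polynomials whose homogeneous components all become expressible in lower degree
after applying `φ`; modulo this ideal, `MvPolynomial σ R` is the associated graded algebra of the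
degree filtration on the range of `φ`. -/
def initialIdeal (φ : MvPolynomial σ R →ₐ[R] A) : Ideal (MvPolynomial σ R) where
  carrier := {f | ∀ k, φ (homogeneousComponent k f) ∈ (degreeLTSubmodule σ R k).map φ.toLinearMap}
  zero_mem' k := by simp only [map_zero, zero_mem]
  add_mem' hf hg k := by
    rw [map_add, map_add]
    exact add_mem (hf k) (hg k)
  smul_mem' c f hf k := by
    rw [smul_eq_mul, ← sum_homogeneousComponent c, Finset.sum_mul, map_sum, map_sum]
    refine sum_mem fun e _ => ?_
    have hc := homogeneousComponent_isHomogeneous e c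
    rw [homogeneousComponent_mul_of_isHomogeneous hc]
    split_ifs with h
    · obtain ⟨g, hg, hgf⟩ := hf (k - e)
      refine ⟨homogeneousComponent e c * g, ?_, ?_⟩
      · exact Nat.add_sub_cancel' h ▸ mul_mem_degreeLTSubmodule hc hg
      · rw [AlgHom.toLinearMap_apply] at hgf ⊢
        rw [map_mul, map_mul, hgf]
    · rw [map_zero]
      exact zero_mem _

lemma mem_initialIdeal_iff_of_isHomogeneous {φ : MvPolynomial σ R →ₐ[R] A} {f : MvPolynomial σ R}
    {d : ℕ} (hf : f.IsHomogeneous d) :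
    f ∈ initialIdeal φ ↔ φ f ∈ (degreeLTSubmodule σ R d).map φ.toLinearMap := by
  refine ⟨fun h => homogeneousComponent_eq_self hf ▸ h d, fun h k => ?_⟩
  rw [homogeneousComponent_of_mem hf]
  split_ifs with hk
  · exact hk ▸ h
  · simp only [map_zero, zero_mem]

lemma mem_initialIdeal_of_sub_mem {φ : MvPolynomial σ R →ₐ[R] A} {f g : MvPolynomial σ R} {d : ℕ}
    (hf : f.IsHomogeneous d) (hg : φ g = 0) (h : g - f ∈ degreeLTSubmodule σ R d) :
    f ∈ initialIdeal φ := by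
  rw [mem_initialIdeal_iff_of_isHomogeneous hf, ← neg_mem_iff]
  exact ⟨g - f, h, by rw [AlgHom.toLinearMap_apply, map_sub, hg, zero_sub]⟩

end DegLT

section HilbertFunction

variable {σ K A : Type*} [Field K]

/-- The Hilbert function of `MvPolynomial σ K ⧸ I`: the dimension of the image of the homogeneous
polynomials of degree `k`. -/
noncomputable def hilbertFunction (I : Ideal (MvPolynomial σ K)) (k : ℕ) : ℕ :=
  Module.finrank K ((homogeneousSubmodule σ K k).map (Ideal.Quotient.mkₐ K I).toLinearMap)

lemma finrank_map_degreeLTSubmodule_le_sum_hilbertFunction [CommRing A] [Algebra K A] [Finite σ]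
    [FiniteDimensional K A] {φ : MvPolynomial σ K →ₐ[K] A} {I : Ideal (MvPolynomial σ K)}
    (hI : I ≤ initialIdeal φ) (m : ℕ) :
    Module.finrank K ((degreeLTSubmodule σ K m).map φ.toLinearMap) ≤
      ∑ k ∈ Finset.range m, hilbertFunction I k := by
  induction m with
  | zero => simp [degreeLTSubmodule_zero]
  | succ m ih =>
    rw [Finset.sum_range_succ, degreeLTSubmodule_succ, Submodule.map_sup]
    refine (finrank_sup_map_le (Ideal.Quotient.mkₐ K I).toLinearMap φ.toLinearMap
      (homogeneousSubmodule_fg σ K m) _ fun u hu h => ?_).trans (Nat.add_le_add_right ih _)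
    exact (mem_initialIdeal_iff_of_isHomogeneous hu).1 (hI (Ideal.Quotient.eq_zero_iff_mem.1 h))

end HilbertFunction

/-! ### Signed relations -/

section SignedRel

variable {ι κ R S : Type*} [CommRing R] [CommRing S]

lemma isHomogeneous_prod_X (S : Finset ι) :
    (∏ i ∈ S, X i : MvPolynomial ι R).IsHomogeneous S.card := by
  simpa using IsHomogeneous.prod S X (fun _ => 1) fun i _ => isHomogeneous_X R i

variable [DecidableEq ι]

/-- The relation (3) of `𝓘₀`, evaluated at elements `x i` of a commutative ring. -/
def signedRel (x : ι → R) (P N : Finset ι) : R :=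
  (∑ k ∈ N, ((∏ i ∈ P, x i) * ∏ j ∈ N.erase k, x j)) -
    ∑ k ∈ P, ((∏ i ∈ P.erase k, x i) * ∏ j ∈ N, x j)

lemma map_signedRel {F : Type*} [FunLike F R S] [RingHomClass F R S] (f : F) (x : ι → R)
    (P N : Finset ι) : f (signedRel x P N) = signedRel (fun i => f (x i)) P N := by
  simp only [signedRel, map_sub, map_sum, map_mul, map_prod]

lemma signedRel_image [DecidableEq κ] {ρ : κ → ι} (hρ : ρ.Injective) (x : ι → R)
    (P N : Finset κ) :
    signedRel x (P.image ρ) (N.image ρ) = signedRel (fun s => x (ρ s)) P N := by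
  simp only [signedRel, Finset.sum_image hρ.injOn, Finset.prod_image hρ.injOn,
    ← Finset.image_erase hρ]

lemma signedRel_swap (x : ι → R) (P N : Finset ι) : signedRel x N P = -signedRel x P N := by
  simp only [signedRel, neg_sub, mul_comm]

lemma signedRel_insert_left (x : ι → R) {P : Finset ι} {a : ι} (ha : a ∉ P) (N : Finset ι) :
    signedRel x (insert a P) N = x a * signedRel x P N - (∏ i ∈ P, x i) * ∏ j ∈ N, x j := by
  have herase : ∑ k ∈ P, (∏ i ∈ (insert a P).erase k, x i) * ∏ j ∈ N, x j =
      x a * ∑ k ∈ P, (∏ i ∈ P.erase k, x i) * ∏ j ∈ N, x j := by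
    rw [Finset.mul_sum]
    refine Finset.sum_congr rfl fun k hk => ?_
    rw [Finset.erase_insert_of_ne (ne_of_mem_of_not_mem hk ha).symm,
      Finset.prod_insert fun h => ha (Finset.mem_of_mem_erase h), mul_assoc]
  simp only [signedRel, Finset.sum_insert ha, herase, Finset.erase_insert ha,
    Finset.prod_insert ha, ← Finset.mul_sum]
  ring

lemma signedRel_insert_right (x : ι → R) (P : Finset ι) {N : Finset ι} {a : ι} (ha : a ∉ N) :
    signedRel x P (insert a N) = x a * signedRel x P N + (∏ i ∈ P, x i) * ∏ j ∈ N, x j := by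
  rw [signedRel_swap, signedRel_insert_left x ha, signedRel_swap]
  ring

lemma isHomogeneous_signedRel_X (P N : Finset ι) :
    (signedRel (X : ι → MvPolynomial ι R) P N).IsHomogeneous (P.card + N.card - 1) := by
  refine IsHomogeneous.sub (IsHomogeneous.sum _ _ _ fun k hk => ?_)
    (IsHomogeneous.sum _ _ _ fun k hk => ?_)
  · convert (isHomogeneous_prod_X P).mul (isHomogeneous_prod_X (N.erase k)) using 1
    rw [Finset.card_erase_of_mem hk, Nat.add_sub_assoc (Finset.card_pos.2 ⟨k, hk⟩)]
  · convert (isHomogeneous_prod_X (P.erase k)).mul (isHomogeneous_prod_X N) using 1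
    rw [Finset.card_erase_of_mem hk, Nat.sub_add_comm (Finset.card_pos.2 ⟨k, hk⟩)]

end SignedRel

section RegionPoly

variable {ι R : Type*} [CommRing R]

/-- With `X i` standing for the indicator function of the positive side of the `i`-th hyperplane,
`regionPoly P N` is, up to sign, the indicator function of the points that are on the positive
side of all `i ∈ P` and of no `i ∈ N`. -/
noncomputable def regionPoly (P N : Finset ι) : MvPolynomial ι R :=
  (∏ i ∈ P, X i) * ∏ j ∈ N, (X j - 1)

lemma prod_X_sub_one_sub_prod_X_mem (N : Finset ι) :
    (∏ j ∈ N, (X j - 1) - ∏ j ∈ N, X j : MvPolynomial ι R) ∈ degreeLTSubmodule ι R N.card := by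
  classical
  induction N using Finset.induction_on with
  | empty => simp
  | @insert a N ha ih =>
    have hsplit : (∏ j ∈ insert a N, (X j - 1) - ∏ j ∈ insert a N, X j : MvPolynomial ι R) =
        X a * (∏ j ∈ N, (X j - 1) - ∏ j ∈ N, X j) -
          ((∏ j ∈ N, (X j - 1) - ∏ j ∈ N, X j) + ∏ j ∈ N, X j) := by
      rw [Finset.prod_insert ha, Finset.prod_insert ha]
      ring
    rw [hsplit, Finset.card_insert_of_notMem ha]
    refine sub_mem ?_ (add_mem (degreeLTSubmodule_mono (Nat.le_succ _) ih) ?_)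
    · exact Nat.add_comm 1 N.card ▸ mul_mem_degreeLTSubmodule (isHomogeneous_X R a) ih
    · exact mem_degreeLTSubmodule_of_isHomogeneous (isHomogeneous_prod_X N) (Nat.lt_succ_self _)

lemma regionPoly_sub_prod_mem (P N : Finset ι) :
    (regionPoly P N - (∏ i ∈ P, X i) * ∏ j ∈ N, X j : MvPolynomial ι R) ∈
      degreeLTSubmodule ι R (P.card + N.card) := by
  rw [regionPoly, ← mul_sub]
  exact mul_mem_degreeLTSubmodule (isHomogeneous_prod_X P) (prod_X_sub_one_sub_prod_X_mem N)

variable [DecidableEq ι]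

lemma regionPoly_sub_swap_add_signedRel_insert_mem {P N : Finset ι} {a : ι} (ha : a ∉ P)
    (h : (regionPoly P N - regionPoly N P + signedRel X P N : MvPolynomial ι R) ∈
      degreeLTSubmodule ι R (P.card + N.card - 1)) :
    (regionPoly (insert a P) N - regionPoly N (insert a P) + signedRel X (insert a P) N :
      MvPolynomial ι R) ∈ degreeLTSubmodule ι R ((insert a P).card + N.card - 1) := by
  have hsplit : (regionPoly (insert a P) N - regionPoly N (insert a P) +
        signedRel X (insert a P) N : MvPolynomial ι R) =
      X a * (regionPoly P N - regionPoly N P + signedRel X P N) +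
        (regionPoly N P - (∏ i ∈ N, X i) * ∏ j ∈ P, X j) := by
    rw [signedRel_insert_left X ha, regionPoly, regionPoly, Finset.prod_insert ha,
      Finset.prod_insert ha, regionPoly, regionPoly]
    ring
  have hcard : (insert a P).card + N.card - 1 = P.card + N.card := by
    rw [Finset.card_insert_of_notMem ha]
    omega
  rw [hsplit, hcard]
  refine add_mem ?_ (Nat.add_comm P.card N.card ▸ regionPoly_sub_prod_mem N P)
  rcases Nat.eq_zero_or_pos (P.card + N.card) with h0 | h0
  · have hzero : (regionPoly P N - regionPoly N P + signedRel X P N : MvPolynomial ι R) = 0 := by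
      rwa [h0, degreeLTSubmodule_zero, Submodule.mem_bot] at h
    rw [hzero, mul_zero]
    exact zero_mem _
  · exact Nat.add_sub_cancel' h0 ▸ mul_mem_degreeLTSubmodule (isHomogeneous_X R a) h

/-- The indicator functions of a region and of its opposite region cancel to leading order, and
`signedRel` is minus the next term. -/
lemma regionPoly_sub_swap_add_signedRel_mem (P N : Finset ι) :
    (regionPoly P N - regionPoly N P + signedRel X P N : MvPolynomial ι R) ∈
      degreeLTSubmodule ι R (P.card + N.card - 1) := by
  have hswap (P N : Finset ι) :
      (regionPoly P N - regionPoly N P + signedRel X P N : MvPolynomial ι R) =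
        -(regionPoly N P - regionPoly P N + signedRel X N P) := by
    rw [signedRel_swap]
    ring
  induction P using Finset.induction_on with
  | empty =>
    induction N using Finset.induction_on with
    | empty => simp [regionPoly, signedRel]
    | insert a N ha ih =>
      rw [hswap, Nat.add_comm] at ih ⊢
      exact neg_mem (regionPoly_sub_swap_add_signedRel_insert_mem ha (neg_mem_iff.1 ih))
  | insert a P ha ih => exact regionPoly_sub_swap_add_signedRel_insert_mem ha ih

end RegionPoly

/-! ### Conditional oriented matroids -/

section COM

variable {ι κ : Type*} {L : Set (ι → SignType)}

/-- The composition `σ ∘ τ` of sign vectors: a point near `σ`, in the direction of `τ`. -/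
def signComp (σ τ : ι → SignType) : ι → SignType := fun i => if σ i = 0 then τ i else σ i

lemma signComp_of_eq_zero {σ : ι → SignType} {i : ι} (h : σ i = 0) (τ : ι → SignType) :
    signComp σ τ i = τ i := if_pos h

lemma signComp_of_ne_zero {σ : ι → SignType} {i : ι} (h : σ i ≠ 0) (τ : ι → SignType) :
    signComp σ τ i = σ i := if_neg h

/-- `L` is the set of covectors of a conditional oriented matroid on the ground set `ι`
(Bandelt–Chepoi–Knauer): it satisfies face symmetry and strong elimination. The sign vectors of
the points of an affine hyperplane arrangement are the motivating example. -/
structure IsCOM (L : Set (ι → SignType)) : Prop where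
  face_symm : ∀ σ ∈ L, ∀ τ ∈ L, signComp σ (-τ) ∈ L
  strong_elim : ∀ σ ∈ L, ∀ τ ∈ L, ∀ e, σ e = -τ e → σ e ≠ 0 →
    ∃ υ ∈ L, υ e = 0 ∧ ∀ f, (σ f = -τ f → σ f = 0) → υ f = signComp σ τ f

/-- The covectors lying on the hyperplane `e`. -/
def signContraction (L : Set (ι → SignType)) (e : ι) : Set (ι → SignType) := {σ ∈ L | σ e = 0}

/-- The sign vectors of `L`, pulled back along `ρ : κ → ι`. For injective `ρ` this keeps the
hyperplanes `ρ s` and deletes the others. -/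
def signPullback (L : Set (ι → SignType)) (ρ : κ → ι) : Set (κ → SignType) := (· ∘ ρ) '' L

/-- The hyperplanes indexed by `S` have a common point. -/
def IsCentral (L : Set (ι → SignType)) (S : Finset ι) : Prop := ∃ σ ∈ L, ∀ i ∈ S, σ i = 0

/-- The positive half-spaces indexed by `P` and the negative ones indexed by `N` have a common
point. -/
def HasRegion (L : Set (ι → SignType)) (P N : Finset ι) : Prop :=
  ∃ σ ∈ L, (∀ i ∈ P, σ i = 1) ∧ ∀ j ∈ N, σ j = -1

lemma isCentral_signPullback [DecidableEq ι] {ρ : κ → ι} {S : Finset κ} :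
    IsCentral (signPullback L ρ) S ↔ IsCentral L (S.image ρ) := by
  simp [IsCentral, signPullback]

lemma hasRegion_signPullback [DecidableEq ι] {ρ : κ → ι} {P N : Finset κ} :
    HasRegion (signPullback L ρ) P N ↔ HasRegion L (P.image ρ) (N.image ρ) := by
  simp [HasRegion, signPullback]

lemma isCentral_signContraction [DecidableEq ι] {e : ι} {S : Finset ι} :
    IsCentral (signContraction L e) S ↔ IsCentral L (insert e S) := by
  simp [IsCentral, signContraction, and_assoc]

lemma IsCOM.pullback (hL : IsCOM L) (ρ : κ → ι) : IsCOM (signPullback L ρ) where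
  face_symm := by
    rintro _ ⟨σ, hσ, rfl⟩ _ ⟨τ, hτ, rfl⟩
    exact ⟨_, hL.face_symm σ hσ τ hτ, rfl⟩
  strong_elim := by
    rintro _ ⟨σ, hσ, rfl⟩ _ ⟨τ, hτ, rfl⟩ e he he0
    obtain ⟨υ, hυ, hυe, hυf⟩ := hL.strong_elim σ hσ τ hτ (ρ e) he he0
    exact ⟨_, ⟨υ, hυ, rfl⟩, hυe, fun f => hυf (ρ f)⟩

lemma IsCOM.contraction (hL : IsCOM L) (i : ι) : IsCOM (signContraction L i) where
  face_symm := by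
    rintro σ ⟨hσ, hσ0⟩ τ ⟨hτ, hτ0⟩
    refine ⟨hL.face_symm σ hσ τ hτ, ?_⟩
    rw [signComp_of_eq_zero hσ0, Pi.neg_apply, hτ0, neg_zero]
  strong_elim := by
    rintro σ ⟨hσ, hσ0⟩ τ ⟨hτ, hτ0⟩ e he he0
    obtain ⟨υ, hυ, hυe, hυf⟩ := hL.strong_elim σ hσ τ hτ e he he0
    refine ⟨υ, ⟨hυ, ?_⟩, hυe, hυf⟩
    rw [hυf i fun _ => hσ0, signComp_of_eq_zero hσ0, hτ0]

namespace IsCOM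

lemma signComp_mem (hL : IsCOM L) {σ τ : ι → SignType} (hσ : σ ∈ L) (hτ : τ ∈ L) :
    signComp σ τ ∈ L := by
  convert hL.face_symm σ hσ _ (hL.face_symm σ hσ τ hτ) using 1
  funext i
  by_cases h : σ i = 0 <;> simp [signComp, h]

lemma hasRegion_of_isCentral [DecidableEq ι] (hL : IsCOM L) {P N : Finset ι}
    (hPN : IsCentral L (P ∪ N)) (h : HasRegion L N P) : HasRegion L P N := by
  obtain ⟨σ, hσ, hσ0⟩ := hPN
  obtain ⟨τ, hτ, hτN, hτP⟩ := h
  refine ⟨_, hL.face_symm σ hσ τ hτ, fun i hi => ?_, fun j hj => ?_⟩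
  · rw [signComp_of_eq_zero (hσ0 i (Finset.mem_union_left N hi)), Pi.neg_apply, hτP i hi,
      neg_neg]
  · rw [signComp_of_eq_zero (hσ0 j (Finset.mem_union_right P hj)), Pi.neg_apply, hτN j hj]

lemma hasRegion_signContraction [DecidableEq ι] (hL : IsCOM L) {P N : Finset ι} {e : ι}
    (hpos : HasRegion L (insert e P) N) (hneg : HasRegion L P (insert e N)) :
    HasRegion (signContraction L e) P N := by
  obtain ⟨σ, hσ, hσP, hσN⟩ := hpos
  obtain ⟨τ, hτ, hτP, hτN⟩ := hneg
  have hσe : σ e = 1 := hσP e (Finset.mem_insert_self e P)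
  have hτe : τ e = -1 := hτN e (Finset.mem_insert_self e N)
  obtain ⟨υ, hυ, hυe, hυf⟩ := hL.strong_elim σ hσ τ hτ e (by rw [hσe, hτe, neg_neg])
    (by rw [hσe]; decide)
  refine ⟨υ, ⟨hυ, hυe⟩, fun i hi => ?_, fun j hj => ?_⟩
  · have hσi : σ i = 1 := hσP i (Finset.mem_insert_of_mem hi)
    rw [hυf i (by rw [hσi, hτP i hi]; decide), signComp_of_ne_zero (by rw [hσi]; decide), hσi]
  · have hτj : τ j = -1 := hτN j (Finset.mem_insert_of_mem hj)
    rw [hυf j (by rw [hσN j hj, hτj]; decide),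
      signComp_of_ne_zero (by rw [hσN j hj]; decide), hσN j hj]

lemma isCentral_of_hasRegion [DecidableEq ι] (hL : IsCOM L) {S : Finset ι}
    (h : ∀ T ⊆ S, HasRegion L T (S \ T)) : IsCentral L S := by
  induction S using Finset.induction_on generalizing L with
  | empty =>
    obtain ⟨σ, hσ, -⟩ := h ∅ (Finset.Subset.refl _)
    exact ⟨σ, hσ, fun i hi => absurd hi (Finset.notMem_empty i)⟩
  | insert a S ha ih =>
    refine isCentral_signContraction.1 (ih (hL.contraction a) fun T hT => ?_)
    refine hL.hasRegion_signContraction ?_ ?_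
    · simpa [Finset.insert_sdiff_insert, Finset.sdiff_insert_of_notMem ha] using
        h (insert a T) (Finset.insert_subset_insert a hT)
    · simpa [Finset.insert_sdiff_of_notMem S (fun haT => ha (hT haT))] using
        h T (hT.trans (Finset.subset_insert a S))

lemma eq_zero_of_hyperplane_subset (hL : IsCOM L) {i j : ι} (hi : ∃ σ ∈ L, σ i = 0)
    (hj : ∃ σ ∈ L, σ j ≠ 0) (hij : ∀ σ ∈ L, σ i = 0 → σ j = 0) {σ : ι → SignType} (hσ : σ ∈ L)
    (hσj : σ j = 0) : σ i = 0 := by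
  by_contra hσi
  obtain ⟨ζ, hζ, hζi⟩ := hi
  obtain ⟨τ, hτ, hτj⟩ := hj
  have hζσ := hL.face_symm ζ hζ σ hσ
  have hi' : signComp ζ (-σ) i = -σ i := signComp_of_eq_zero hζi _
  have hj' : signComp ζ (-σ) j = 0 := by
    rw [signComp_of_eq_zero (hij ζ hζ hζi), Pi.neg_apply, hσj, neg_zero]
  have hi₁ : signComp σ τ i = σ i := signComp_of_ne_zero hσi τ
  have hi₂ : signComp (signComp ζ (-σ)) τ i = -σ i := by
    rw [signComp_of_ne_zero (by rwa [hi', Ne, SignType.neg_eq_zero_iff]), hi']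
  have hj₁ : signComp σ τ j = τ j := signComp_of_eq_zero hσj τ
  have hj₂ : signComp (signComp ζ (-σ)) τ j = τ j := signComp_of_eq_zero hj' τ
  obtain ⟨υ, hυ, hυi, hυf⟩ := hL.strong_elim _ (hL.signComp_mem hσ hτ) _
    (hL.signComp_mem hζσ hτ) i (by rw [hi₁, hi₂, neg_neg]) (by rwa [hi₁])
  have hυj : υ j = τ j := by
    rw [hυf j, signComp_of_ne_zero (by rwa [hj₁]), hj₁]
    rw [hj₁, hj₂]
    exact SignType.self_eq_neg_iff.1
  exact hτj (hυj ▸ hij υ hυ hυi)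

end IsCOM

end COM

section CovectorIdeal

variable {ι K : Type*} [DecidableEq ι] [Field K] {L : Set (ι → SignType)}

/-- The ideal `𝓘₀`, with coefficients in `K`, of a set of covectors. -/
noncomputable def covectorIdeal (K : Type*) [Field K] (L : Set (ι → SignType)) :
    Ideal (MvPolynomial ι K) :=
  Ideal.span ({p | ∃ i, p = X i ^ 2} ∪ {p | ∃ S, ¬IsCentral L S ∧ p = ∏ i ∈ S, X i} ∪
    {p | ∃ P N, Disjoint P N ∧ ¬HasRegion L P N ∧ IsCentral L (P ∪ N) ∧ p = signedRel X P N})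

lemma X_sq_mem_covectorIdeal (i : ι) : X i ^ 2 ∈ covectorIdeal K L :=
  Ideal.subset_span (.inl (.inl ⟨i, rfl⟩))

lemma prod_X_mem_covectorIdeal {S : Finset ι} (hS : ¬IsCentral L S) :
    ∏ i ∈ S, X i ∈ covectorIdeal K L :=
  Ideal.subset_span (.inl (.inr ⟨S, hS, rfl⟩))

lemma signedRel_mem_covectorIdeal {P N : Finset ι} (hd : Disjoint P N) (hr : ¬HasRegion L P N)
    (hc : IsCentral L (P ∪ N)) : signedRel X P N ∈ covectorIdeal K L :=
  Ideal.subset_span (.inr ⟨P, N, hd, hr, hc, rfl⟩)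

lemma covectorIdeal_le {J : Ideal (MvPolynomial ι K)} (hsq : ∀ i, X i ^ 2 ∈ J)
    (hprod : ∀ S, ¬IsCentral L S → ∏ i ∈ S, X i ∈ J)
    (hrel : ∀ P N, Disjoint P N → ¬HasRegion L P N → IsCentral L (P ∪ N) →
      signedRel X P N ∈ J) : covectorIdeal K L ≤ J := by
  refine Ideal.span_le.2 ?_
  rintro _ ((⟨i, rfl⟩ | ⟨S, hS, rfl⟩) | ⟨P, N, hd, hr, hc, rfl⟩)
  exacts [hsq i, hprod S hS, hrel P N hd hr hc]

section

attribute [local instance] MvPolynomial.gradedAlgebra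

lemma isHomogeneous_covectorIdeal :
    (covectorIdeal K L).IsHomogeneous (homogeneousSubmodule ι K) := by
  refine Ideal.homogeneous_span _ _ ?_
  rintro _ ((⟨i, rfl⟩ | ⟨S, -, rfl⟩) | ⟨P, N, -, -, -, rfl⟩)
  exacts [⟨_, (isHomogeneous_X K i).pow 2⟩, ⟨_, isHomogeneous_prod_X S⟩,
    ⟨_, isHomogeneous_signedRel_X P N⟩]

end

end CovectorIdeal

/-! ### Lower bound: counting topes -/

section Topes

variable {ι K : Type*} [Field K] {L : Set (ι → SignType)}

/-- The topes of `L`: for the covectors of an arrangement, these are its chambers. -/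
def topes (L : Set (ι → SignType)) : Set (ι → SignType) := {σ ∈ L | ∀ i, σ i ≠ 0}

/-- Evaluation of polynomials at the Heaviside functions of the hyperplanes (Varchenko–Gelfand). -/
noncomputable def heaviside (K : Type*) [Field K] (L : Set (ι → SignType)) :
    MvPolynomial ι K →ₐ[K] (topes L → K) :=
  aeval fun i σ => if σ.1 i = 1 then 1 else 0

lemma heaviside_regionPoly_ne_zero_iff {P N : Finset ι} (σ : topes L) :
    heaviside K L (regionPoly P N) σ ≠ 0 ↔ (∀ i ∈ P, σ.1 i = 1) ∧ ∀ j ∈ N, σ.1 j = -1 := by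
  have hneg (j : ι) : σ.1 j = -1 ↔ σ.1 j ≠ 1 := by
    have := σ.2.2 j
    generalize σ.1 j = s at this
    decide +revert
  have hpos (i : ι) : (if σ.1 i = 1 then (1 : K) else 0) ≠ 0 ↔ σ.1 i = 1 := by simp
  have hsub (j : ι) : (if σ.1 j = 1 then (1 : K) else 0) - 1 ≠ 0 ↔ σ.1 j ≠ 1 := by
    by_cases h : σ.1 j = 1 <;> simp [h]
  simp only [regionPoly, heaviside, map_mul, map_prod, map_sub, aeval_X, map_one, Pi.mul_apply,
    Finset.prod_apply, Pi.sub_apply, Pi.one_apply, mul_ne_zero_iff, Finset.prod_ne_zero_iff,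
    hpos, hsub, hneg]

lemma heaviside_regionPoly_eq_zero {P N : Finset ι} (h : ¬HasRegion L P N) :
    heaviside K L (regionPoly P N) = 0 := by
  funext σ
  by_contra hσ
  exact h ⟨σ.1, σ.2.1, (heaviside_regionPoly_ne_zero_iff σ).1 hσ⟩

lemma IsCOM.covectorIdeal_le_initialIdeal [DecidableEq ι] (hL : IsCOM L) :
    covectorIdeal K L ≤ initialIdeal (heaviside K L) := by
  refine covectorIdeal_le (fun i => ?_) (fun S hS => ?_) fun P N _ hr hc => ?_
  · refine mem_initialIdeal_of_sub_mem (g := X i ^ 2 - X i) ((isHomogeneous_X K i).pow 2) ?_ ?_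
    · funext σ
      simp [heaviside]
    · rw [sub_sub_cancel_left]
      exact neg_mem (mem_degreeLTSubmodule_of_isHomogeneous (isHomogeneous_X K i) (by norm_num))
  · obtain ⟨T, hT, hr⟩ : ∃ T ⊆ S, ¬HasRegion L T (S \ T) := by
      by_contra! h
      exact hS (hL.isCentral_of_hasRegion h)
    refine mem_initialIdeal_of_sub_mem (isHomogeneous_prod_X S)
      (heaviside_regionPoly_eq_zero hr) ?_
    have h := regionPoly_sub_prod_mem (R := K) T (S \ T)
    rwa [mul_comm (∏ i ∈ T, _), Finset.prod_sdiff hT, add_comm,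
      Finset.card_sdiff_add_card_eq_card hT] at h
  · have hr' : ¬HasRegion L N P := fun h => hr (hL.hasRegion_of_isCentral hc h)
    refine mem_initialIdeal_of_sub_mem (g := regionPoly N P - regionPoly P N)
      (isHomogeneous_signedRel_X P N) ?_ ?_
    · rw [map_sub, heaviside_regionPoly_eq_zero hr, heaviside_regionPoly_eq_zero hr', sub_zero]
    · rw [← neg_mem_iff]
      convert regionPoly_sub_swap_add_signedRel_mem (R := K) P N using 1
      ring

lemma regionPoly_mem_degreeLTSubmodule {P N : Finset ι} {m : ℕ} (h : P.card + N.card < m) :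
    (regionPoly P N : MvPolynomial ι K) ∈ degreeLTSubmodule ι K m := by
  rw [← sub_add_cancel (regionPoly P N) ((∏ i ∈ P, X i) * ∏ j ∈ N, X j)]
  exact add_mem (degreeLTSubmodule_mono h.le (regionPoly_sub_prod_mem P N))
    (mem_degreeLTSubmodule_of_isHomogeneous
      ((isHomogeneous_prod_X P).mul (isHomogeneous_prod_X N)) h)

lemma map_heaviside_degreeLTSubmodule [Finite ι] {m : ℕ} (hm : Nat.card ι < m) :
    (degreeLTSubmodule ι K m).map (heaviside K L).toLinearMap = ⊤ := by
  classical
  have := Fintype.ofFinite ι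
  rw [Nat.card_eq_fintype_card] at hm
  refine eq_top_iff.2 fun f _ => ?_
  rw [← Finset.univ_sum_single f]
  refine sum_mem fun σ _ => ?_
  set P : Finset ι := {i | σ.1 i = 1}
  set h := heaviside K L (regionPoly P Pᶜ)
  have hne (τ : topes L) : h τ ≠ 0 ↔ τ = σ := by
    rw [heaviside_regionPoly_ne_zero_iff, Subtype.ext_iff, funext_iff, ← forall_and]
    refine forall_congr' fun i => ?_
    have hτ := τ.2.2 i
    have hσ := σ.2.2 i
    simp only [P, Finset.mem_compl, Finset.mem_filter_univ]
    generalize τ.1 i = s at hτ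
    generalize σ.1 i = t at hσ
    decide +revert
  have hsingle : Pi.single σ (f σ) = (f σ / h σ) • h := by
    funext τ
    rcases eq_or_ne τ σ with rfl | hτ
    · simp [div_mul_cancel₀ _ ((hne τ).2 rfl)]
    · simp [hτ, not_not.1 (mt (hne τ).1 hτ)]
  rw [hsingle]
  refine Submodule.smul_mem _ _ (Submodule.mem_map_of_mem (regionPoly_mem_degreeLTSubmodule ?_))
  rwa [Finset.card_add_card_compl]

lemma IsCOM.ncard_topes_le_sum_hilbertFunction [Finite ι] [DecidableEq ι] (hL : IsCOM L) {m : ℕ}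
    (hm : Nat.card ι < m) :
    (topes L).ncard ≤ ∑ k ∈ Finset.range m, hilbertFunction (covectorIdeal K L) k := by
  have := Fintype.ofFinite (topes L)
  have h := finrank_map_degreeLTSubmodule_le_sum_hilbertFunction
    (hL.covectorIdeal_le_initialIdeal (K := K)) m
  rwa [map_heaviside_degreeLTSubmodule hm, finrank_top, Module.finrank_fintype_fun_eq_card,
    ← Nat.card_eq_fintype_card, Nat.card_coe_set_eq] at h

end Topes

/-! ### Deletion and restriction -/

section DeletionRestriction

universe u

variable {ι κ : Type*} {L : Set (ι → SignType)} {i₀ : ι} {ρ : κ → ι}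

/-- A conditional oriented matroid whose hyperplanes are proper and whose nonempty hyperplanes are
pairwise distinct. -/
structure IsSimpleCOM (L : Set (ι → SignType)) : Prop extends IsCOM L where
  exists_ne_zero : ∀ i, ∃ σ ∈ L, σ i ≠ 0
  eq_of_zero_iff : ∀ i j, (∃ σ ∈ L, σ i = 0) → (∀ σ ∈ L, σ i = 0 ↔ σ j = 0) → i = j

/-- `ρ` chooses one hyperplane of `L` through each nonempty trace on the hyperplane `i₀`, so that
`signPullback (signContraction L i₀) ρ` is the restriction of `L` to `i₀`. -/
structure IsRestriction (L : Set (ι → SignType)) (i₀ : ι) (ρ : κ → ι) : Prop where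
  ne : ∀ s, ρ s ≠ i₀
  nonempty : ∀ s, (signContraction (signContraction L i₀) (ρ s)).Nonempty
  injective_trace : Function.Injective fun s => signContraction (signContraction L i₀) (ρ s)
  exists_trace_eq : ∀ i ≠ i₀, (signContraction (signContraction L i₀) i).Nonempty →
    ∃ s, signContraction (signContraction L i₀) (ρ s) = signContraction (signContraction L i₀) i

lemma IsRestriction.injective (hρ : IsRestriction L i₀ ρ) : ρ.Injective :=
  hρ.injective_trace.of_comp (f := fun i => signContraction (signContraction L i₀) i)

lemma exists_isRestriction {ι : Type u} (L : Set (ι → SignType)) (i₀ : ι) :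
    ∃ (κ : Type u) (ρ : κ → ι), IsRestriction L i₀ ρ := by
  set trace := fun i => signContraction (signContraction L i₀) i
  obtain ⟨s, hs, hbij⟩ :=
    (surjOn_image trace {i | i ≠ i₀ ∧ (trace i).Nonempty}).exists_bijOn_subset
  refine ⟨s, (↑), fun i => (hs i.2).1, fun i => (hs i.2).2, hbij.injOn.injective, ?_⟩
  intro i hi hne
  obtain ⟨j, hj, hji⟩ := hbij.surjOn ⟨i, ⟨hi, hne⟩, rfl⟩
  exact ⟨⟨j, hj⟩, hji⟩

namespace IsSimpleCOM

lemma deletion (hL : IsSimpleCOM L) (i₀ : ι) :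
    IsSimpleCOM (signPullback L ((↑) : {i // i ≠ i₀} → ι)) where
  toIsCOM := hL.pullback _
  exists_ne_zero i := by
    obtain ⟨σ, hσ, hσi⟩ := hL.exists_ne_zero i
    exact ⟨_, ⟨σ, hσ, rfl⟩, hσi⟩
  eq_of_zero_iff := by
    rintro i j ⟨_, ⟨σ, hσ, rfl⟩, hσi⟩ hij
    exact Subtype.ext (hL.eq_of_zero_iff i j ⟨σ, hσ, hσi⟩ fun τ hτ => hij _ ⟨τ, hτ, rfl⟩)

lemma restriction (hL : IsSimpleCOM L) (hρ : IsRestriction L i₀ ρ) :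
    IsSimpleCOM (signPullback (signContraction L i₀) ρ) where
  toIsCOM := (hL.contraction i₀).pullback ρ
  exists_ne_zero s := by
    by_contra! h
    have hsub : ∀ σ ∈ L, σ i₀ = 0 → σ (ρ s) = 0 := fun σ hσ hσ0 => h _ ⟨σ, ⟨hσ, hσ0⟩, rfl⟩
    obtain ⟨τ, ⟨hτ, hτ0⟩, -⟩ := hρ.nonempty s
    refine hρ.ne s (hL.eq_of_zero_iff i₀ (ρ s) ⟨τ, hτ, hτ0⟩ fun σ hσ => ⟨hsub σ hσ, ?_⟩).symm
    exact hL.eq_zero_of_hyperplane_subset ⟨τ, hτ, hτ0⟩ (hL.exists_ne_zero (ρ s)) hsub hσ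
  eq_of_zero_iff s t _ hst := by
    refine hρ.injective_trace (Set.ext fun σ => and_congr_right fun hσ => ?_)
    exact hst _ ⟨σ, hσ, rfl⟩

end IsSimpleCOM

/-! ### Counting topes -/

/-- The covectors vanishing at `i₀` and nowhere else: in an arrangement, the walls that the
hyperplane `i₀` contributes to the chambers. -/
def walls (L : Set (ι → SignType)) (i₀ : ι) : Set (ι → SignType) :=
  {υ ∈ signContraction L i₀ | ∀ i ≠ i₀, υ i ≠ 0}

lemma IsCOM.exists_tope_of_mem_walls (hL : IsCOM L) (hi₀ : ∃ σ ∈ L, σ i₀ ≠ 0)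
    {υ : ι → SignType} (hυ : υ ∈ walls L i₀) {s : SignType} (hs : s ≠ 0) :
    ∃ σ ∈ topes L, σ i₀ = s ∧ ∀ i ≠ i₀, σ i = υ i := by
  obtain ⟨⟨hυ, hυ0⟩, hυne⟩ := hυ
  obtain ⟨τ, hτ, hτ0⟩ : ∃ τ, signComp υ τ ∈ L ∧ τ i₀ = s := by
    obtain ⟨τ, hτ, hτ0⟩ := hi₀
    have hsign : τ i₀ = s ∨ -τ i₀ = s := by
      generalize τ i₀ = t at hτ0
      decide +revert
    rcases hsign with h | h
    exacts [⟨τ, hL.signComp_mem hυ hτ, h⟩, ⟨-τ, hL.face_symm υ hυ τ hτ, h⟩]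
  have hcomp0 : signComp υ τ i₀ = s := (signComp_of_eq_zero hυ0 τ).trans hτ0
  have hcomp (i : ι) (hi : i ≠ i₀) : signComp υ τ i = υ i := signComp_of_ne_zero (hυne i hi) τ
  refine ⟨signComp υ τ, ⟨hτ, fun i => ?_⟩, hcomp0, hcomp⟩
  rcases eq_or_ne i i₀ with rfl | hi
  exacts [hcomp0 ▸ hs, hcomp i hi ▸ hυne i hi]

lemma injOn_deletion_walls :
    InjOn (fun σ => σ ∘ ((↑) : {i // i ≠ i₀} → ι)) (walls L i₀) :=
  fun σ hσ τ hτ h => funext fun i => by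
    rcases eq_or_ne i i₀ with rfl | hi
    exacts [hσ.1.2.trans hτ.1.2.symm, congrFun h ⟨i, hi⟩]

lemma IsRestriction.ncard_topes_restriction_le_ncard_walls [Finite ι] (hρ : IsRestriction L i₀ ρ) :
    (topes (signPullback (signContraction L i₀) ρ)).ncard ≤ (walls L i₀).ncard := by
  refine (ncard_le_ncard ?_ (toFinite _)).trans (ncard_image_le (f := (· ∘ ρ)) (toFinite _))
  rintro _ ⟨⟨σ, hσ, rfl⟩, hne⟩
  refine ⟨σ, ⟨hσ, fun i hi hσi => ?_⟩, rfl⟩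
  obtain ⟨s, hs⟩ := hρ.exists_trace_eq i hi ⟨σ, hσ, hσi⟩
  exact hne s (hs.ge ⟨hσ, hσi⟩).2

/-- A chamber of the deletion extends to a chamber on the positive or on the negative side of `i₀`,
and the ones meeting the hyperplane `i₀` extend to both sides. -/
lemma IsSimpleCOM.ncard_topes_deletion_add_ncard_topes_restriction_le [Finite ι]
    (hL : IsSimpleCOM L) (hρ : IsRestriction L i₀ ρ) :
    (topes (signPullback L ((↑) : {i // i ≠ i₀} → ι))).ncard +
      (topes (signPullback (signContraction L i₀) ρ)).ncard ≤ (topes L).ncard := by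
  set del : (ι → SignType) → {i // i ≠ i₀} → SignType := (· ∘ (↑))
  set side : SignType → Set (ι → SignType) := fun s => {σ ∈ topes L | σ i₀ = s}
  have hextend {υ : ι → SignType} (hυ : υ ∈ walls L i₀) {s : SignType} (hs : s ≠ 0) :
      del υ ∈ del '' side s := by
    obtain ⟨σ, hσ, hσ0, hσυ⟩ := hL.exists_tope_of_mem_walls (hL.exists_ne_zero i₀) hυ hs
    exact ⟨σ, ⟨hσ, hσ0⟩, funext fun i => hσυ i i.2⟩
  have hdeletion : topes (signPullback L (↑)) ⊆ del '' side 1 ∪ del '' side (-1) := by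
    rintro _ ⟨⟨σ, hσ, rfl⟩, hne⟩
    by_cases h0 : σ i₀ = 0
    · exact .inl (hextend ⟨⟨hσ, h0⟩, fun i hi => hne ⟨i, hi⟩⟩ one_ne_zero)
    · have htope : σ ∈ topes L := ⟨hσ, fun i => by
        rcases eq_or_ne i i₀ with rfl | hi
        exacts [h0, hne ⟨i, hi⟩]⟩
      rcases h : σ i₀ with _ | _ | _
      exacts [absurd h h0, .inr ⟨σ, ⟨htope, h⟩, rfl⟩, .inl ⟨σ, ⟨htope, h⟩, rfl⟩]
  have hrestriction : (topes (signPullback (signContraction L i₀) ρ)).ncard ≤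
      (del '' side 1 ∩ del '' side (-1)).ncard :=
    calc _ ≤ (walls L i₀).ncard := hρ.ncard_topes_restriction_le_ncard_walls
      _ = (del '' walls L i₀).ncard := injOn_deletion_walls.ncard_image.symm
      _ ≤ (del '' side 1 ∩ del '' side (-1)).ncard := ncard_le_ncard <| image_subset_iff.2
          fun υ hυ => ⟨hextend hυ one_ne_zero, hextend hυ (by decide)⟩
  have hdisj : Disjoint (side 1) (side (-1)) :=
    Set.disjoint_left.2 fun σ h h' => absurd (h.2.symm.trans h'.2) (by decide)
  calc _ ≤ (del '' side 1 ∪ del '' side (-1)).ncard + (del '' side 1 ∩ del '' side (-1)).ncard :=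
        Nat.add_le_add (ncard_le_ncard hdeletion) hrestriction
    _ = (del '' side 1).ncard + (del '' side (-1)).ncard := ncard_union_add_ncard_inter _ _
    _ ≤ (side 1).ncard + (side (-1)).ncard :=
        Nat.add_le_add (ncard_image_le (toFinite _)) (ncard_image_le (toFinite _))
    _ = (side 1 ∪ side (-1)).ncard := (ncard_union_eq hdisj).symm
    _ ≤ (topes L).ncard := ncard_le_ncard (union_subset (sep_subset _ _) (sep_subset _ _))

end DeletionRestriction

/-! ### Upper bound: multiplication by `X i₀` -/

section ColonIdeal

variable {R A B : Type*} [CommRing R] [CommRing A] [CommRing B] [Algebra R A] [Algebra R B]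

/-- The elements that become members of the subalgebra `D` after applying `φ` and multiplying by
`x`; they form an ideal because `D` contains the range of `φ`. -/
def colonIdeal (φ : A →ₐ[R] B) (D : Subalgebra R B) (hφ : φ.range ≤ D) (x : B) : Ideal A where
  carrier := {a | x * φ a ∈ D}
  zero_mem' := by simp only [mem_ofPred_eq, map_zero, mul_zero, zero_mem]
  add_mem' ha hb := by
    simp only [mem_ofPred_eq, map_add, mul_add] at *
    exact add_mem ha hb
  smul_mem' c a ha := by
    rw [mem_ofPred_eq, smul_eq_mul, map_mul, mul_left_comm]
    exact mul_mem (hφ ⟨c, rfl⟩) ha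

end ColonIdeal

section GradedUpperBound

variable {ι ι' κ K : Type*} [Field K] {I : Ideal (MvPolynomial ι K)}
  {I' : Ideal (MvPolynomial ι' K)} {I'' : Ideal (MvPolynomial κ K)} {θ : ι' → ι} {ρ : κ → ι}
  {i₀ : ι}

lemma finrank_map_mk_rename_le [Finite ι'] (hI' : I' ≤ I.comap (rename θ)) (k : ℕ) :
    Module.finrank K ((homogeneousSubmodule ι' K k).map
      ((Ideal.Quotient.mkₐ K I).comp (rename θ)).toLinearMap) ≤ hilbertFunction I' k := by
  have h := finrank_sup_map_le (Ideal.Quotient.mkₐ K I').toLinearMap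
    ((Ideal.Quotient.mkₐ K I).comp (rename θ)).toLinearMap (homogeneousSubmodule_fg ι' K k) ⊥
    fun u _ hu => Ideal.Quotient.eq_zero_iff_mem.2 (hI' (Ideal.Quotient.eq_zero_iff_mem.1 hu))
  rwa [bot_sup_eq, finrank_bot, zero_add] at h

attribute [local instance] MvPolynomial.gradedAlgebra

lemma hilbertFunction_zero_le [Finite ι'] (hI : I.IsHomogeneous (homogeneousSubmodule ι K))
    (hI' : I' ≤ I.comap (rename θ))
    (hspan : ∀ f : MvPolynomial ι K, ∃ (g : MvPolynomial ι' K) (h : MvPolynomial κ K),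
      f - (rename θ g + X i₀ * rename ρ h) ∈ I) :
    hilbertFunction I 0 ≤ hilbertFunction I' 0 := by
  refine le_trans ?_ (finrank_map_mk_rename_le hI' 0)
  have : Module.Finite K ((homogeneousSubmodule ι' K 0).map
      ((Ideal.Quotient.mkₐ K I).comp (rename θ)).toLinearMap) :=
    Module.Finite.of_fg ((homogeneousSubmodule_fg ι' K 0).map _)
  refine Submodule.finrank_mono ?_
  rintro _ ⟨f, hf, rfl⟩
  obtain ⟨g, h, hfgh⟩ := hspan f
  have hcomp := homogeneousComponent_mem_of_mem hI hfgh 0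
  rw [map_sub, map_add, homogeneousComponent_eq_self hf, ← rename_homogeneousComponent,
    homogeneousComponent_mul_of_isHomogeneous (isHomogeneous_X K i₀), if_neg (by decide),
    add_zero] at hcomp
  exact ⟨_, homogeneousComponent_isHomogeneous 0 g, (Ideal.Quotient.eq.2 hcomp).symm⟩

lemma homogeneousComponent_succ_X_mul_rename (ρ : κ → ι) (i₀ : ι) (p : MvPolynomial κ K) (k : ℕ) :
    homogeneousComponent (k + 1) (X i₀ * rename ρ p) =
      X i₀ * rename ρ (homogeneousComponent k p) := by
  rw [homogeneousComponent_mul_of_isHomogeneous (isHomogeneous_X K i₀), if_pos (by simp),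
    Nat.add_sub_cancel, rename_homogeneousComponent]

lemma hilbertFunction_succ_le [Finite ι'] [Finite κ]
    (hI : I.IsHomogeneous (homogeneousSubmodule ι K)) (hI' : I' ≤ I.comap (rename θ))
    (hI'' : ∀ h ∈ I'', ∃ g : MvPolynomial ι' K, X i₀ * rename ρ h - rename θ g ∈ I)
    (hspan : ∀ f : MvPolynomial ι K, ∃ (g : MvPolynomial ι' K) (h : MvPolynomial κ K),
      f - (rename θ g + X i₀ * rename ρ h) ∈ I) (k : ℕ) :
    hilbertFunction I (k + 1) ≤ hilbertFunction I' (k + 1) + hilbertFunction I'' k := by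
  set W := (homogeneousSubmodule ι' K (k + 1)).map
    ((Ideal.Quotient.mkₐ K I).comp (rename θ)).toLinearMap
  set T := (Ideal.Quotient.mkₐ K I).toLinearMap ∘ₗ
    LinearMap.mulLeft K (X i₀) ∘ₗ (rename ρ : MvPolynomial κ K →ₐ[K] _).toLinearMap
  have : Module.Finite K W := Module.Finite.of_fg ((homogeneousSubmodule_fg ι' K (k + 1)).map _)
  have hker : ∀ u ∈ homogeneousSubmodule κ K k,
      (Ideal.Quotient.mkₐ K I'').toLinearMap u = 0 → T u ∈ W := by
    intro u hu hu0
    obtain ⟨g, hg⟩ := hI'' u (Ideal.Quotient.eq_zero_iff_mem.1 hu0)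
    have hcomp := homogeneousComponent_mem_of_mem hI hg (k + 1)
    rw [map_sub, homogeneousComponent_succ_X_mul_rename, homogeneousComponent_eq_self hu,
      ← rename_homogeneousComponent] at hcomp
    exact ⟨_, homogeneousComponent_isHomogeneous (k + 1) g, (Ideal.Quotient.eq.2 hcomp).symm⟩
  have hle : (homogeneousSubmodule ι K (k + 1)).map (Ideal.Quotient.mkₐ K I).toLinearMap ≤
      W ⊔ (homogeneousSubmodule κ K k).map T := by
    rintro _ ⟨f, hf, rfl⟩
    obtain ⟨g, h, hfgh⟩ := hspan f
    have hcomp := homogeneousComponent_mem_of_mem hI hfgh (k + 1)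
    rw [map_sub, map_add, homogeneousComponent_eq_self hf, ← rename_homogeneousComponent,
      homogeneousComponent_succ_X_mul_rename] at hcomp
    rw [AlgHom.toLinearMap_apply, Ideal.Quotient.mkₐ_eq_mk, Ideal.Quotient.eq.2 hcomp, map_add]
    exact Submodule.add_mem_sup ⟨_, homogeneousComponent_isHomogeneous (k + 1) g, rfl⟩
      ⟨_, homogeneousComponent_isHomogeneous k h, rfl⟩
  have : Module.Finite K ((homogeneousSubmodule κ K k).map T) :=
    Module.Finite.of_fg ((homogeneousSubmodule_fg κ K k).map T)
  calc hilbertFunction I (k + 1)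
      ≤ Module.finrank K ↥(W ⊔ (homogeneousSubmodule κ K k).map T) := Submodule.finrank_mono hle
    _ ≤ Module.finrank K W + hilbertFunction I'' k :=
        finrank_sup_map_le _ T (homogeneousSubmodule_fg κ K k) W hker
    _ ≤ _ := Nat.add_le_add_right (finrank_map_mk_rename_le hI' (k + 1)) _

end GradedUpperBound

section DeletionSubalgebra

variable {ι κ K : Type*} [DecidableEq ι] [Field K] {L : Set (ι → SignType)} {i₀ : ι} {ρ : κ → ι}

lemma covectorIdeal_signPullback_le [DecidableEq κ] (hρ : ρ.Injective) :
    covectorIdeal K (signPullback L ρ) ≤ (covectorIdeal K L).comap (rename ρ) := by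
  refine covectorIdeal_le (fun s => ?_) (fun S hS => ?_) fun P N hd hr hc => ?_
  · rw [Ideal.mem_comap, map_pow, rename_X]
    exact X_sq_mem_covectorIdeal (ρ s)
  · rw [isCentral_signPullback] at hS
    simpa only [Ideal.mem_comap, map_prod, rename_X, Finset.prod_image hρ.injOn] using
      prod_X_mem_covectorIdeal (K := K) hS
  · rw [hasRegion_signPullback] at hr
    rw [isCentral_signPullback, Finset.image_union] at hc
    simpa only [Ideal.mem_comap, map_signedRel, rename_X, signedRel_image hρ] using
      signedRel_mem_covectorIdeal (K := K) ((Finset.disjoint_image hρ).2 hd) hr hc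

/-- The polynomials that are congruent modulo `𝓘₀` to a polynomial not involving `X i₀`. -/
noncomputable def deletionSubalgebra (K : Type*) [Field K] (L : Set (ι → SignType)) (i₀ : ι) :
    Subalgebra K (MvPolynomial ι K) :=
  (((Ideal.Quotient.mkₐ K (covectorIdeal K L)).comp
    (rename ((↑) : {i // i ≠ i₀} → ι))).range).comap (Ideal.Quotient.mkₐ K (covectorIdeal K L))

lemma mem_deletionSubalgebra_iff {f : MvPolynomial ι K} :
    f ∈ deletionSubalgebra K L i₀ ↔
      ∃ g : MvPolynomial {i // i ≠ i₀} K, f - rename (↑) g ∈ covectorIdeal K L :=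
  exists_congr fun _ => eq_comm.trans Ideal.Quotient.eq

lemma mem_deletionSubalgebra_of_mem_covectorIdeal {f : MvPolynomial ι K}
    (hf : f ∈ covectorIdeal K L) : f ∈ deletionSubalgebra K L i₀ :=
  mem_deletionSubalgebra_iff.2 ⟨0, by rwa [map_zero, sub_zero]⟩

lemma range_rename_le_deletionSubalgebra (hρ : ∀ s, ρ s ≠ i₀) :
    (rename ρ : MvPolynomial κ K →ₐ[K] _).range ≤ deletionSubalgebra K L i₀ := by
  rintro _ ⟨g, rfl⟩
  refine mem_deletionSubalgebra_iff.2 ⟨rename (fun s => ⟨ρ s, hρ s⟩) g, ?_⟩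
  rw [rename_rename]
  exact (sub_self (rename ρ g)).symm ▸ zero_mem _

lemma X_mem_deletionSubalgebra {i : ι} (hi : i ≠ i₀) : X i ∈ deletionSubalgebra K L i₀ :=
  range_rename_le_deletionSubalgebra (ρ := fun _ : Unit => i) (fun _ => hi) ⟨X (), rename_X _ _⟩

lemma prod_X_mem_deletionSubalgebra {S : Finset ι} (hS : i₀ ∉ S) :
    ∏ i ∈ S, X i ∈ deletionSubalgebra K L i₀ :=
  prod_mem fun _ hi => X_mem_deletionSubalgebra (ne_of_mem_of_not_mem hi hS)

/-- If `P`, `N` has no region on the hyperplane `i₀`, then it has no region on one of the two sides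
of `i₀`, and the leading coefficient in `X i₀` of the relation for that side is
`signedRel X P N`. -/
lemma IsCOM.X_mul_signedRel_mem_deletionSubalgebra (hL : IsCOM L) {P N : Finset ι} (hP : i₀ ∉ P)
    (hN : i₀ ∉ N) (hd : Disjoint P N) (hr : ¬HasRegion (signContraction L i₀) P N)
    (hc : IsCentral (signContraction L i₀) (P ∪ N)) :
    X i₀ * signedRel X P N ∈ deletionSubalgebra K L i₀ := by
  rw [isCentral_signContraction] at hc
  have hprod : (∏ i ∈ P, X i) * ∏ j ∈ N, X j ∈ deletionSubalgebra K L i₀ :=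
    mul_mem (prod_X_mem_deletionSubalgebra hP) (prod_X_mem_deletionSubalgebra hN)
  by_cases hpos : HasRegion L (insert i₀ P) N
  · have hrel := signedRel_mem_covectorIdeal (K := K) (Finset.disjoint_insert_right.2 ⟨hP, hd⟩)
      (fun hneg => hr (hL.hasRegion_signContraction hpos hneg)) (by rwa [Finset.union_insert])
    rw [signedRel_insert_right X P hN] at hrel
    exact (add_mem_cancel_right hprod).1 (mem_deletionSubalgebra_of_mem_covectorIdeal hrel)
  · have hrel := signedRel_mem_covectorIdeal (K := K) (Finset.disjoint_insert_left.2 ⟨hN, hd⟩)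
      hpos (by rwa [Finset.insert_union])
    rw [signedRel_insert_left X hP, sub_eq_add_neg] at hrel
    exact (add_mem_cancel_right (neg_mem hprod)).1
      (mem_deletionSubalgebra_of_mem_covectorIdeal hrel)

/-- Two hyperplanes with the same trace on `i₀` are parallel or antiparallel on `i₀`: the regions
`{i}`, `{j}` and `{i, j}`, `∅` are not both present. -/
lemma IsCOM.exists_X_mul_X_sub_mem_deletionSubalgebra (hL : IsCOM L) {i j : ι} (hi : i ≠ i₀)
    (hj : j ≠ i₀)
    (htrace : signContraction (signContraction L i₀) i = signContraction (signContraction L i₀) j)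
    (hne : (signContraction (signContraction L i₀) i).Nonempty) :
    ∃ c : K, X i₀ * X i - c • (X i₀ * X j) ∈ deletionSubalgebra K L i₀ := by
  rcases eq_or_ne i j with rfl | hij
  · exact ⟨1, by rw [one_smul, sub_self]; exact zero_mem _⟩
  have hcentral (S : Finset ι) (hS : S ⊆ {i, j}) : IsCentral (signContraction L i₀) S := by
    obtain ⟨σ, hσ, hσi⟩ := hne
    have hσj : σ j = 0 := (htrace.le ⟨hσ, hσi⟩).2
    refine ⟨σ, hσ, fun k hk => ?_⟩
    rcases Finset.mem_insert.1 (hS hk) with rfl | hk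
    exacts [hσi, Finset.mem_singleton.1 hk ▸ hσj]
  by_cases hr : HasRegion (signContraction L i₀) {i} {j}
  · have hr' : ¬HasRegion (signContraction L i₀) {j, i} ∅ := fun hr' => by
      obtain ⟨σ, hσ, hσi, -⟩ := (hL.contraction i₀).hasRegion_signContraction hr' hr
      have hσ0 : σ i = 0 := (htrace.ge hσ).2
      exact absurd (hσ0.symm.trans (hσi i (Finset.mem_singleton_self i))) (by decide)
    have h := hL.X_mul_signedRel_mem_deletionSubalgebra (K := K) (by simp [hi.symm, hj.symm])
      (Finset.notMem_empty _) (Finset.disjoint_empty_right _) hr'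
      (hcentral _ (by simp [Finset.pair_comm]))
    refine ⟨-1, ?_⟩
    convert neg_mem h using 1
    rw [signedRel_insert_left X (Finset.notMem_singleton.2 hij.symm)]
    simp only [neg_smul, one_smul, sub_neg_eq_add, signedRel, Finset.prod_singleton,
      Finset.notMem_empty, not_false_eq_true, Finset.erase_eq_of_notMem, Finset.prod_empty, mul_one,
      Finset.sum_const, Finset.card_empty, zero_nsmul, Finset.sum_singleton, Finset.erase_singleton,
      zero_sub, mul_neg]
    ring
  · have h := hL.X_mul_signedRel_mem_deletionSubalgebra (K := K)
      (Finset.notMem_singleton.2 hi.symm) (Finset.notMem_singleton.2 hj.symm)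
      (Finset.disjoint_singleton.2 hij) hr (hcentral _ subset_rfl)
    refine ⟨1, ?_⟩
    convert h using 1
    simp [signedRel, mul_sub]

lemma IsCOM.X_mul_mem_deletionSubalgebra_of_mem_covectorIdeal [DecidableEq κ] (hL : IsCOM L)
    (hρ : IsRestriction L i₀ ρ) {h : MvPolynomial κ K}
    (hh : h ∈ covectorIdeal K (signPullback (signContraction L i₀) ρ)) :
    X i₀ * rename ρ h ∈ deletionSubalgebra K L i₀ := by
  have hnot (S : Finset κ) : i₀ ∉ S.image ρ := by
    simpa only [Finset.mem_image, not_exists, not_and] using fun (s : κ) (_ : s ∈ S) => hρ.ne s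
  refine covectorIdeal_le (J := colonIdeal (rename ρ) (deletionSubalgebra K L i₀)
    (range_rename_le_deletionSubalgebra hρ.ne) (X i₀)) (fun s => ?_) (fun S hS => ?_)
    (fun P N hd hr hc => ?_) hh
  · refine mem_deletionSubalgebra_of_mem_covectorIdeal ?_
    rw [map_pow, rename_X]
    exact Ideal.mul_mem_left _ _ (X_sq_mem_covectorIdeal (ρ s))
  · refine mem_deletionSubalgebra_of_mem_covectorIdeal ?_
    rw [isCentral_signPullback, isCentral_signContraction] at hS
    simpa only [map_prod, rename_X, Finset.prod_insert (hnot S),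
      Finset.prod_image hρ.injective.injOn] using prod_X_mem_covectorIdeal (K := K) hS
  · rw [hasRegion_signPullback] at hr
    rw [isCentral_signPullback, Finset.image_union] at hc
    have hmem := hL.X_mul_signedRel_mem_deletionSubalgebra (K := K) (hnot P) (hnot N)
      ((Finset.disjoint_image hρ.injective).2 hd) hr hc
    rw [signedRel_image hρ.injective] at hmem
    suffices X i₀ * rename ρ (signedRel (X : κ → MvPolynomial κ K) P N) ∈
      deletionSubalgebra K L i₀ from this
    simpa only [map_signedRel, rename_X] using hmem

/-- The polynomials of the form `d + X i₀ * rename ρ h` with `d ∈ deletionSubalgebra K L i₀`. -/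
noncomputable def deletionAddRestriction (K : Type*) [Field K] (L : Set (ι → SignType)) (i₀ : ι)
    (ρ : κ → ι) : Submodule K (MvPolynomial ι K) :=
  Subalgebra.toSubmodule (deletionSubalgebra K L i₀) ⊔
    (LinearMap.mulLeft K (X i₀) ∘ₗ (rename ρ : MvPolynomial κ K →ₐ[K] _).toLinearMap).range

lemma mem_deletionAddRestriction_iff {f : MvPolynomial ι K} :
    f ∈ deletionAddRestriction K L i₀ ρ ↔
      ∃ d ∈ deletionSubalgebra K L i₀, ∃ h : MvPolynomial κ K, d + X i₀ * rename ρ h = f := by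
  simp [deletionAddRestriction, Submodule.mem_sup]

lemma mem_deletionAddRestriction_of_mem_deletionSubalgebra {f : MvPolynomial ι K}
    (hf : f ∈ deletionSubalgebra K L i₀) : f ∈ deletionAddRestriction K L i₀ ρ :=
  Submodule.mem_sup_left hf

lemma IsCOM.X_mul_rename_mul_X_mem (hL : IsCOM L) (hρ : IsRestriction L i₀ ρ)
    (h : MvPolynomial κ K) {i : ι} (hi : i ≠ i₀) :
    X i₀ * rename ρ h * X i ∈ deletionAddRestriction K L i₀ ρ := by
  by_cases hne : (signContraction (signContraction L i₀) i).Nonempty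
  · obtain ⟨s, hs⟩ := hρ.exists_trace_eq i hi hne
    obtain ⟨c, hc⟩ := hL.exists_X_mul_X_sub_mem_deletionSubalgebra (K := K) hi (hρ.ne s)
      hs.symm hne
    refine mem_deletionAddRestriction_iff.2
      ⟨_, mul_mem (range_rename_le_deletionSubalgebra hρ.ne ⟨h, rfl⟩) hc, c • (h * X s), ?_⟩
    simp only [AlgHom.toRingHom_eq_coe, RingHom.coe_coe, map_mul, rename_X, smul_eq_C_mul,
      rename_C]
    ring
  · have hcentral : ¬IsCentral L {i₀, i} := fun ⟨σ, hσ, hσ0⟩ =>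
      hne ⟨σ, ⟨hσ, hσ0 i₀ (by simp)⟩, hσ0 i (by simp)⟩
    have hXX : ∏ j ∈ {i₀, i}, X j ∈ covectorIdeal K L := prod_X_mem_covectorIdeal hcentral
    rw [Finset.prod_pair hi.symm] at hXX
    rw [mul_right_comm]
    exact mem_deletionAddRestriction_of_mem_deletionSubalgebra
      (mem_deletionSubalgebra_of_mem_covectorIdeal (Ideal.mul_mem_right _ _ hXX))

lemma IsCOM.mul_X_mem_deletionAddRestriction (hL : IsCOM L) (hρ : IsRestriction L i₀ ρ)
    {f : MvPolynomial ι K} (hf : f ∈ deletionAddRestriction K L i₀ ρ) {i : ι} (hi : i ≠ i₀) :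
    f * X i ∈ deletionAddRestriction K L i₀ ρ := by
  obtain ⟨d, hd, h, rfl⟩ := mem_deletionAddRestriction_iff.1 hf
  rw [add_mul]
  exact add_mem (mem_deletionAddRestriction_of_mem_deletionSubalgebra
    (mul_mem hd (X_mem_deletionSubalgebra hi))) (hL.X_mul_rename_mul_X_mem hρ h hi)

lemma IsCOM.X_mul_mem_deletionAddRestriction (hL : IsCOM L) (hρ : IsRestriction L i₀ ρ)
    (f : MvPolynomial ι K) : X i₀ * f ∈ deletionAddRestriction K L i₀ ρ := by
  induction f using MvPolynomial.induction_on with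
  | C a => exact mem_deletionAddRestriction_iff.2 ⟨0, zero_mem _, C a, by simp⟩
  | add f g hf hg => exact mul_add (X i₀) f g ▸ add_mem hf hg
  | mul_X f i hf =>
    rcases eq_or_ne i i₀ with rfl | hi
    · rw [mul_left_comm, ← sq]
      exact mem_deletionAddRestriction_of_mem_deletionSubalgebra
        (mem_deletionSubalgebra_of_mem_covectorIdeal
          (Ideal.mul_mem_left _ _ (X_sq_mem_covectorIdeal i)))
    · exact mul_assoc (X i₀) f (X i) ▸ hL.mul_X_mem_deletionAddRestriction hρ hf hi

lemma IsCOM.mem_deletionAddRestriction (hL : IsCOM L) (hρ : IsRestriction L i₀ ρ)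
    (f : MvPolynomial ι K) : f ∈ deletionAddRestriction K L i₀ ρ := by
  induction f using MvPolynomial.induction_on with
  | C a =>
    exact mem_deletionAddRestriction_of_mem_deletionSubalgebra (Subalgebra.algebraMap_mem _ a)
  | add f g hf hg => exact add_mem hf hg
  | mul_X f i hf =>
    rcases eq_or_ne i i₀ with rfl | hi
    · exact mul_comm (X i) f ▸ hL.X_mul_mem_deletionAddRestriction hρ f
    · exact hL.mul_X_mem_deletionAddRestriction hρ hf hi

lemma IsCOM.hilbertFunction_covectorIdeal_le [Finite ι] [DecidableEq κ] (hL : IsCOM L)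
    (hρ : IsRestriction L i₀ ρ) (k : ℕ) :
    hilbertFunction (covectorIdeal K L) k ≤
      hilbertFunction (covectorIdeal K (signPullback L ((↑) : {i // i ≠ i₀} → ι))) k +
        if k = 0 then 0
        else hilbertFunction (covectorIdeal K (signPullback (signContraction L i₀) ρ)) (k - 1) := by
  have : Finite κ := Finite.of_injective ρ hρ.injective
  have hspan (f : MvPolynomial ι K) : ∃ (g : MvPolynomial {i // i ≠ i₀} K) (h : MvPolynomial κ K),
      f - (rename (↑) g + X i₀ * rename ρ h) ∈ covectorIdeal K L := by
    obtain ⟨d, hd, h, rfl⟩ := mem_deletionAddRestriction_iff.1 (hL.mem_deletionAddRestriction hρ f)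
    obtain ⟨g, hg⟩ := mem_deletionSubalgebra_iff.1 hd
    exact ⟨g, h, by rwa [add_sub_add_right_eq_sub]⟩
  have hdel := covectorIdeal_signPullback_le (K := K) (L := L)
    (Subtype.val_injective (p := fun i => i ≠ i₀))
  cases k with
  | zero => exact hilbertFunction_zero_le isHomogeneous_covectorIdeal hdel hspan
  | succ k =>
    exact hilbertFunction_succ_le isHomogeneous_covectorIdeal hdel (fun h hh =>
      mem_deletionSubalgebra_iff.1 (hL.X_mul_mem_deletionSubalgebra_of_mem_covectorIdeal hρ hh))
      hspan k

end DeletionSubalgebra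

/-! ### Squeezing between the bounds -/

section Squeeze

universe u

variable {ι κ K : Type*} [Field K] {L : Set (ι → SignType)} {i₀ : ι} {ρ : κ → ι}

lemma hilbertFunction_le_of_isEmpty [IsEmpty ι] (I : Ideal (MvPolynomial ι K)) (k : ℕ) :
    hilbertFunction I k ≤ if k = 0 then 1 else 0 := by
  unfold hilbertFunction
  split_ifs with hk
  · rw [hk, homogeneousSubmodule_zero, Submodule.one_eq_span, Submodule.map_span, image_singleton]
    exact (finrank_span_le_card _).trans_eq (by simp)
  · have hbot : homogeneousSubmodule ι K k = ⊥ := by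
      refine eq_bot_iff.2 fun f (hf : f.IsHomogeneous k) => of_not_not fun hne => hk ?_
      refine hf.inj_right ?_ hne
      rw [eq_C_of_isEmpty f]
      exact isHomogeneous_C _ _
    rw [hbot, Submodule.map_bot, finrank_bot]

lemma covectorIdeal_empty [DecidableEq ι] : covectorIdeal K (∅ : Set (ι → SignType)) = ⊤ :=
  (Ideal.eq_top_iff_one _).2 (prod_X_mem_covectorIdeal (S := ∅) fun ⟨_, h, _⟩ => h)

lemma hilbertFunction_top (k : ℕ) : hilbertFunction (⊤ : Ideal (MvPolynomial ι K)) k = 0 :=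
  have : Subsingleton (MvPolynomial ι K ⧸ (⊤ : Ideal (MvPolynomial ι K))) :=
    Ideal.Quotient.subsingleton_iff.2 rfl
  Module.finrank_zero_of_subsingleton

lemma sum_hilbertFunction_le_ncard_topes_of_isEmpty [IsEmpty ι] [DecidableEq ι] (m : ℕ) :
    ∑ k ∈ Finset.range m, hilbertFunction (covectorIdeal K L) k ≤ (topes L).ncard := by
  rcases L.eq_empty_or_nonempty with rfl | ⟨σ, hσ⟩
  · simp only [covectorIdeal_empty, hilbertFunction_top, Finset.sum_const_zero, Nat.zero_le]
  · calc ∑ k ∈ Finset.range m, hilbertFunction (covectorIdeal K L) k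
        ≤ ∑ k ∈ Finset.range m, if k = 0 then 1 else 0 :=
          Finset.sum_le_sum fun k _ => hilbertFunction_le_of_isEmpty _ k
      _ ≤ 1 := by
          rw [Finset.sum_ite_eq']
          split_ifs <;> simp
      _ ≤ (topes L).ncard := (ncard_pos (toFinite _)).2 ⟨σ, hσ, isEmptyElim⟩

lemma sum_range_add_shift_le (f g : ℕ → ℕ) (m : ℕ) :
    ∑ k ∈ Finset.range m, (f k + if k = 0 then 0 else g (k - 1)) ≤
      ∑ k ∈ Finset.range m, f k + ∑ k ∈ Finset.range m, g k := by
  rw [Finset.sum_add_distrib]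
  gcongr 1
  cases m with
  | zero => rfl
  | succ m => simp [Finset.sum_range_succ', Finset.sum_range_succ g]

lemma IsSimpleCOM.sum_hilbertFunction_le_ncard_topes {ι : Type u} [Finite ι] [DecidableEq ι]
    {L : Set (ι → SignType)} (hL : IsSimpleCOM L) (m : ℕ) :
    ∑ k ∈ Finset.range m, hilbertFunction (covectorIdeal K L) k ≤ (topes L).ncard := by
  induction hn : Nat.card ι using Nat.strong_induction_on generalizing ι with
  | _ n ih =>
    rcases isEmpty_or_nonempty ι with hι | ⟨⟨i₀⟩⟩
    · exact sum_hilbertFunction_le_ncard_topes_of_isEmpty m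
    classical
    obtain ⟨κ, ρ, hρ⟩ := exists_isRestriction L i₀
    have : Finite κ := Finite.of_injective ρ hρ.injective
    have hdel : Nat.card {i // i ≠ i₀} < n :=
      hn ▸ Finite.card_subtype_lt (p := fun i => i ≠ i₀) (x := i₀) (by simp)
    have hres : Nat.card κ < n :=
      (Nat.card_le_card_of_injective (fun s => (⟨ρ s, hρ.ne s⟩ : {i // i ≠ i₀}))
        fun _ _ hst => hρ.injective (congrArg Subtype.val hst)).trans_lt hdel
    calc _ ≤ _ := Finset.sum_le_sum fun k _ => hL.hilbertFunction_covectorIdeal_le hρ k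
      _ ≤ _ := sum_range_add_shift_le _ _ m
      _ ≤ _ := Nat.add_le_add (ih _ hdel (hL.deletion i₀) rfl) (ih _ hres (hL.restriction hρ) rfl)
      _ ≤ (topes L).ncard := hL.ncard_topes_deletion_add_ncard_topes_restriction_le hρ

theorem bAlg_deletion_restriction_general [Finite ι] [DecidableEq ι] [DecidableEq κ]
    (hL : IsSimpleCOM L) (hρ : IsRestriction L i₀ ρ) (k : ℕ) :
    hilbertFunction (covectorIdeal K L) k =
      hilbertFunction (covectorIdeal K (signPullback L ((↑) : {i // i ≠ i₀} → ι))) k +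
        if k = 0 then 0
        else hilbertFunction (covectorIdeal K (signPullback (signContraction L i₀) ρ)) (k - 1) := by
  have : Finite κ := Finite.of_injective ρ hρ.injective
  set m := Nat.card ι + k + 1
  have hle (j : ℕ) (_ : j ∈ Finset.range m) := hL.hilbertFunction_covectorIdeal_le (K := K) hρ j
  refine (Finset.sum_eq_sum_iff_of_le hle).1 ((Finset.sum_le_sum hle).antisymm ?_) k
    (Finset.mem_range.2 (by omega))
  calc _ ≤ _ := sum_range_add_shift_le _ _ m
    _ ≤ _ := Nat.add_le_add ((hL.deletion i₀).sum_hilbertFunction_le_ncard_topes m)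
        ((hL.restriction hρ).sum_hilbertFunction_le_ncard_topes m)
    _ ≤ (topes L).ncard := hL.ncard_topes_deletion_add_ncard_topes_restriction_le hρ
    _ ≤ _ := hL.ncard_topes_le_sum_hilbertFunction (by omega)

end Squeeze

/-! ### Sign vectors of affine arrangements -/

section SignVector

variable {𝕜 E P ι : Type*} [Field 𝕜] [LinearOrder 𝕜] [IsStrictOrderedRing 𝕜] [AddCommGroup E]
  [Module 𝕜 E] [AddTorsor E P] {ω : ι → P →ᵃ[𝕜] 𝕜}

/-- The sign vector of the point `v`: on which side of each hyperplane `ω i = 0` it lies. -/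
def signVector (ω : ι → P →ᵃ[𝕜] 𝕜) (v : P) : ι → SignType := fun i => SignType.sign (ω i v)

lemma sign_mul_add_mul {a b s t : 𝕜} (hs : 0 < s) (ht : 0 < t)
    (h : SignType.sign a = -SignType.sign b → SignType.sign a = 0) :
    SignType.sign (s * a + t * b) =
      if SignType.sign a = 0 then SignType.sign b else SignType.sign a := by
  rcases lt_trichotomy a 0 with ha | rfl | ha
  · have hb : b ≤ 0 := not_lt.1 fun hb => by simp [ha, hb] at h
    rw [sign_neg ha, if_neg (by decide), sign_neg]
    exact add_neg_of_neg_of_nonpos (mul_neg_of_pos_of_neg hs ha)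
      (mul_nonpos_of_nonneg_of_nonpos ht.le hb)
  · rw [sign_zero, if_pos rfl, mul_zero, zero_add, sign_mul, sign_pos ht, one_mul]
  · have hb : 0 ≤ b := not_lt.1 fun hb => by simp [ha, hb] at h
    rw [sign_pos ha, if_neg (by decide), sign_pos]
    exact add_pos_of_pos_of_nonneg (mul_pos hs ha) (mul_nonneg ht.le hb)

lemma sign_add_of_abs_lt_abs {a b : 𝕜} (h : |b| < |a|) :
    SignType.sign (a + b) = SignType.sign a := by
  rcases lt_trichotomy a 0 with ha | rfl | ha
  · rw [abs_of_neg ha] at h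
    rw [sign_neg ha, sign_neg (by linarith [le_abs_self b])]
  · exact absurd h (by simp)
  · rw [abs_of_pos ha] at h
    rw [sign_pos ha, sign_pos (by linarith [neg_abs_le b])]

lemma exists_mul_add_mul_eq_zero {a b : 𝕜} (h : SignType.sign a = -SignType.sign b)
    (ha : a ≠ 0) : ∃ t, 0 < t ∧ 0 < 1 - t ∧ (1 - t) * a + t * b = 0 := by
  obtain ⟨hne, hpos, hpos'⟩ : a - b ≠ 0 ∧ 0 < a / (a - b) ∧ 0 < -b / (a - b) := by
    rw [← Left.sign_neg] at h
    rcases ha.lt_or_gt with ha | ha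
    · rw [sign_neg ha, eq_comm, sign_eq_neg_one_iff] at h
      have hab : a - b < 0 := by linarith
      exact ⟨hab.ne, div_pos_of_neg_of_neg ha hab, div_pos_of_neg_of_neg h hab⟩
    · rw [sign_pos ha, eq_comm, sign_eq_one_iff] at h
      have hab : 0 < a - b := by linarith
      exact ⟨hab.ne', div_pos ha hab, div_pos h hab⟩
  have hone : 1 - a / (a - b) = -b / (a - b) := by
    field_simp
    ring
  refine ⟨a / (a - b), hpos, hone ▸ hpos', ?_⟩
  rw [hone]
  field_simp
  ring

lemma exists_pos_forall_mul_abs_lt [Finite ι] (a b : ι → 𝕜) :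
    ∃ t : 𝕜, 0 < t ∧ ∀ i, a i ≠ 0 → t * |b i| < |a i| := by
  have hpos (i : ι) : ∃ t : Ioi (0 : 𝕜), a i ≠ 0 → (t : 𝕜) * |b i| < |a i| := by
    by_cases h : a i = 0
    · exact ⟨⟨1, one_pos⟩, absurd h⟩
    · obtain ⟨t, ht, hlt⟩ := exists_pos_mul_lt (abs_pos.2 h) |b i|
      exact ⟨⟨t, ht⟩, fun _ => mul_comm |b i| t ▸ hlt⟩
  choose t ht using hpos
  obtain ⟨t₀, ht₀⟩ := Finite.exists_ge t
  exact ⟨t₀, t₀.2, fun i hi =>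
    (mul_le_mul_of_nonneg_right (Subtype.coe_le_coe.2 (ht₀ i)) (abs_nonneg _)).trans_lt (ht i hi)⟩

lemma isCOM_range_signVector [Finite ι] (ω : ι → P →ᵃ[𝕜] 𝕜) : IsCOM (range (signVector ω)) where
  face_symm := by
    rintro _ ⟨u, rfl⟩ _ ⟨v, rfl⟩
    obtain ⟨t, ht, hlt⟩ := exists_pos_forall_mul_abs_lt (fun i => ω i u) fun i => ω i u - ω i v
    refine ⟨AffineMap.lineMap u v (-t), funext fun i => ?_⟩
    have hline : ω i (AffineMap.lineMap u v (-t)) = ω i u + t * (ω i u - ω i v) := by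
      rw [AffineMap.apply_lineMap, AffineMap.lineMap_apply_ring']
      ring
    by_cases hu : ω i u = 0
    · rw [signComp_of_eq_zero (σ := signVector ω u) (sign_eq_zero_iff.2 hu), signVector, hline, hu,
        zero_add, zero_sub, sign_mul, sign_pos ht, one_mul, Left.sign_neg]
      rfl
    · rw [signComp_of_ne_zero (σ := signVector ω u) (sign_ne_zero.2 hu), signVector, hline,
        sign_add_of_abs_lt_abs]
      · rfl
      · rw [abs_mul, abs_of_pos ht]
        exact hlt i hu
  strong_elim := by
    rintro _ ⟨u, rfl⟩ _ ⟨v, rfl⟩ e he he0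
    obtain ⟨t, ht0, ht1, hte⟩ := exists_mul_add_mul_eq_zero he (sign_ne_zero.1 he0)
    have hline (f : ι) : ω f (AffineMap.lineMap u v t) = (1 - t) * ω f u + t * ω f v := by
      rw [AffineMap.apply_lineMap, AffineMap.lineMap_apply_ring]
    refine ⟨_, ⟨AffineMap.lineMap u v t, rfl⟩, ?_, fun f hf => ?_⟩
    · rw [signVector, hline, hte, sign_zero]
    · rw [signVector, hline, sign_mul_add_mul ht1 ht0 hf]
      rfl

lemma isSimpleCOM_range_signVector [Finite ι] (hω : ∀ i, ω i ≠ 0)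
    (hinj : Function.Injective fun i => {v | ω i v = 0}) :
    IsSimpleCOM (range (signVector ω)) where
  toIsCOM := isCOM_range_signVector ω
  exists_ne_zero i := by
    obtain ⟨v, hv⟩ := DFunLike.ne_iff.1 (hω i)
    exact ⟨_, ⟨v, rfl⟩, sign_ne_zero.2 hv⟩
  eq_of_zero_iff i j _ hij := hinj <| Set.ext fun v =>
    sign_eq_zero_iff.symm.trans <| (hij _ ⟨v, rfl⟩).trans sign_eq_zero_iff

end SignVector

section CordovilIdeal

variable {ι W : Type*} {U : Set W}

lemma iInter_inter_iInter_nonempty_iff (hU : U.Nonempty) {A B : ι → Set W} (hA : ∀ i, A i ⊆ U)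
    (hB : ∀ i, B i ⊆ U) (P N : Finset ι) :
    ((⋂ i ∈ P, A i) ∩ ⋂ j ∈ N, B j).Nonempty ↔
      ∃ w ∈ U, (∀ i ∈ P, w ∈ A i) ∧ ∀ j ∈ N, w ∈ B j := by
  simp only [Set.Nonempty, mem_inter_iff, mem_iInter₂]
  refine ⟨fun ⟨w, hwA, hwB⟩ => ?_, fun ⟨w, _, hw⟩ => ⟨w, hw⟩⟩
  rcases P.eq_empty_or_nonempty with rfl | ⟨i, hi⟩
  · rcases N.eq_empty_or_nonempty with rfl | ⟨j, hj⟩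
    · exact hU.imp fun u hu => ⟨hu, by simp⟩
    · exact ⟨w, hB j (hwB j hj), hwA, hwB⟩
  · exact ⟨w, hA i (hwA i hi), hwA, hwB⟩

lemma bIdeal_eq_covectorIdeal [DecidableEq ι] (hU : U.Nonempty) {Z Zp Zm : ι → Set W}
    {s : W → ι → SignType} (hZ : ∀ i, Z i = {w ∈ U | s w i = 0})
    (hZp : ∀ i, Zp i = {w ∈ U | s w i = 1}) (hZm : ∀ i, Zm i = {w ∈ U | s w i = -1}) :
    bIdeal Z Zp Zm = covectorIdeal ℚ (s '' U) := by
  obtain rfl : Z = _ := funext hZ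
  obtain rfl : Zp = _ := funext hZp
  obtain rfl : Zm = _ := funext hZm
  have hregion (P N : Finset ι) : (⋂ i ∈ P, {w ∈ U | s w i = 1}) ∩
      (⋂ j ∈ N, {w ∈ U | s w j = -1}) = ∅ ↔ ¬HasRegion (s '' U) P N := by
    rw [← not_nonempty_iff_eq_empty, iInter_inter_iInter_nonempty_iff hU
      (fun i => sep_subset _ _) (fun i => sep_subset _ _), HasRegion, exists_mem_image]
    refine not_congr (exists_congr fun w => and_congr_right fun hw => ?_)
    simp only [mem_sep_iff, hw, true_and]
  have hcentral (S : Finset ι) : (⋂ i ∈ S, {w ∈ U | s w i = 0}) = ∅ ↔ ¬IsCentral (s '' U) S := by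
    have h := iInter_inter_iInter_nonempty_iff hU (A := fun i => {w ∈ U | s w i = 0})
      (B := fun i => {w ∈ U | s w i = 0})
      (fun i => sep_subset _ _) (fun i => sep_subset _ _) S ∅
    simp only [Finset.notMem_empty, iInter_of_empty, iInter_univ, inter_univ] at h
    rw [← not_nonempty_iff_eq_empty, h, IsCentral, exists_mem_image]
    refine not_congr (exists_congr fun w => and_congr_right fun hw => ?_)
    simp only [mem_sep_iff, hw, true_and, IsEmpty.forall_iff, implies_true, and_true]
  simp only [bIdeal, bFam1, bFam2, bFam3, hregion, hcentral, not_not, ne_eq]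
  rfl

lemma signContraction_image (s : W → ι → SignType) (U : Set W) (i : ι) :
    signContraction (s '' U) i = s '' (U ∩ {w | s w i = 0}) :=
  (image_inter_preimage s U {σ | σ i = 0}).symm

end CordovilIdeal

section HyperplaneArrangement

variable {E : Type*} [NormedAddCommGroup E] [NormedSpace ℝ E] {n : ℕ}
  {ω : Fin (n + 1) → E →ᵃ[ℝ] ℝ} {r : restIdx ω → Fin (n + 1)}

lemma signContraction_range_signVector (i : Fin (n + 1)) :
    signContraction (range (signVector ω)) i = signVector ω '' Hyp ω i := by
  simp only [← image_univ, signContraction_image, univ_inter, signVector, sign_eq_zero_iff]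
  rfl

lemma trace_eq_image_signVector (i j : Fin (n + 1)) :
    signContraction (signContraction (range (signVector ω)) j) i =
      signVector ω '' (Hyp ω i ∩ Hyp ω j) := by
  simp only [signContraction_range_signVector, signContraction_image, signVector,
    sign_eq_zero_iff, inter_comm (Hyp ω i)]
  rfl

lemma signVector_preimage_trace (i j : Fin (n + 1)) :
    signVector ω ⁻¹' signContraction (signContraction (range (signVector ω)) j) i =
      Hyp ω i ∩ Hyp ω j := by
  ext v
  simp [signContraction, signVector, Hyp, and_comm]

lemma isRestriction_range_signVector
    (hr : ∀ s : restIdx ω, r s ≠ 0 ∧ s.1 = Hyp ω (r s) ∩ Hyp ω 0) :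
    IsRestriction (range (signVector ω)) 0 r where
  ne s := (hr s).1
  nonempty s := by
    rw [trace_eq_image_signVector, ← (hr s).2]
    exact s.2.1.image _
  injective_trace s t hst := Subtype.ext <| by
    rw [(hr s).2, (hr t).2, ← signVector_preimage_trace, ← signVector_preimage_trace]
    exact congrArg (signVector ω ⁻¹' ·) hst
  exists_trace_eq i hi hne := by
    rw [trace_eq_image_signVector, image_nonempty] at hne
    let s : restIdx ω := ⟨_, hne, i, hi, rfl⟩
    refine ⟨s, ?_⟩
    rw [trace_eq_image_signVector, trace_eq_image_signVector, ← (hr s).2]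

lemma hyp_nonempty {m : ℕ} {ω : Fin m → E →ᵃ[ℝ] ℝ} {i : Fin m} (hω : (ω i).linear ≠ 0) :
    (Hyp ω i).Nonempty :=
  (ω i).linear_surjective_iff.1 (LinearMap.surjective hω) 0

lemma bIdeal_arrangement {m : ℕ} (ω : Fin m → E →ᵃ[ℝ] ℝ) :
    bIdeal (Hyp ω) (Hplus ω) (Hminus ω) = covectorIdeal ℚ (range (signVector ω)) := by
  rw [← image_univ]
  refine bIdeal_eq_covectorIdeal univ_nonempty ?_ ?_ ?_ <;>
    intro i <;> ext v <;> simp [Hyp, Hplus, Hminus, signVector, sign_eq_one_iff,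
      sign_eq_neg_one_iff]

lemma bIdeal_deletion (ω : Fin (n + 1) → E →ᵃ[ℝ] ℝ) :
    bIdeal (fun i : {i : Fin (n + 1) // i ≠ 0} => Hyp ω i.1) (fun i => Hplus ω i.1)
        (fun i => Hminus ω i.1) =
      covectorIdeal ℚ (signPullback (range (signVector ω)) (↑)) := by
  rw [signPullback, ← range_comp, ← image_univ]
  refine bIdeal_eq_covectorIdeal univ_nonempty ?_ ?_ ?_ <;>
    intro i <;> ext v <;> simp [Hyp, Hplus, Hminus, signVector, sign_eq_one_iff,
      sign_eq_neg_one_iff]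

lemma bIdeal_restriction (h₀ : (Hyp ω 0).Nonempty)
    (hr : ∀ s : restIdx ω, s.1 = Hyp ω (r s) ∩ Hyp ω 0) :
    bIdeal (fun s : restIdx ω => s.1) (fun s => Hplus ω (r s) ∩ Hyp ω 0)
        (fun s => Hminus ω (r s) ∩ Hyp ω 0) =
      covectorIdeal ℚ (signPullback (signContraction (range (signVector ω)) 0) r) := by
  rw [signPullback, signContraction_range_signVector, image_image]
  refine bIdeal_eq_covectorIdeal h₀ ?_ ?_ ?_ <;>
    intro i <;> ext v <;> simp [hr, Hyp, Hplus, Hminus, signVector, sign_eq_one_iff,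
      sign_eq_neg_one_iff, and_comm]

end HyperplaneArrangement

lemma finrank_bGrade {ι W : Type*} [DecidableEq ι] (Z Zp Zm : ι → Set W) (k : ℕ) :
    Module.finrank ℚ (bGrade Z Zp Zm k) = hilbertFunction (bIdeal Z Zp Zm) k := rfl

/-- deletion–restriction for `B`.  Suppose the hyperplanes of `𝒜` are
pairwise distinct; let `𝒜'` be the deletion of `H 0` and `𝒜''` the restriction to `H 0`
(its hyperplanes being the distinct nonempty intersections `H i ∩ H 0`, with half-space
data induced by a choice `r` of a defining hyperplane for each intersection).  Then for
all `k`, `dim B(𝒜)ₖ = dim B(𝒜')ₖ + dim B(𝒜'')ₖ₋₁`. -/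
theorem bAlg_deletion_restriction {n : ℕ} (ω : Fin (n + 1) → V →ᵃ[ℝ] ℝ)
    (hω : ∀ i, (ω i).linear ≠ 0)
    (hdist : ∀ i j : Fin (n + 1), i ≠ j → Hyp ω i ≠ Hyp ω j)
    (r : restIdx ω → Fin (n + 1))
    (hr : ∀ s : restIdx ω, r s ≠ 0 ∧ s.1 = Hyp ω (r s) ∩ Hyp ω 0) :
    ∀ k : ℕ,
      Module.finrank ℚ (bGrade (Hyp ω) (Hplus ω) (Hminus ω) k) =
        Module.finrank ℚ (bGrade (fun i : {i : Fin (n + 1) // i ≠ 0} => Hyp ω i.1)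
            (fun i => Hplus ω i.1) (fun i => Hminus ω i.1) k) +
          (if k = 0 then 0 else
            Module.finrank ℚ (bGrade (fun s : restIdx ω => s.1)
              (fun s => Hplus ω (r s) ∩ Hyp ω 0)
              (fun s => Hminus ω (r s) ∩ Hyp ω 0) (k - 1))) := by
  intro k
  rw [finrank_bGrade, finrank_bGrade, finrank_bGrade, bIdeal_arrangement, bIdeal_deletion,
    bIdeal_restriction (hyp_nonempty (hω 0)) fun s => (hr s).2]
  have hω' (i) : ω i ≠ 0 := fun h => hω i (congrArg AffineMap.linear h)
  exact bAlg_deletion_restriction_general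
    (isSimpleCOM_range_signVector hω' fun i j => not_imp_not.1 (hdist i j))
    (isRestriction_range_signVector hr) k
end

section
/- Let c𝒜 be the cone of the affine arrangement 𝒜. The ℚ-algebra homomorphism φ : B(c𝒜) → B(𝒜) determined by e_{cH_i} ↦ e_{H_i} for 1 ≤ i ≤ n and e_{cH_0} ↦ 0 is well defined, the ℚ-linear map t : B(𝒜) → B(c𝒜) determined on monomials by e_S ↦ e_{cH_0}·e_{cS} (where for S ⊆ {1,…,n}, e_S = ∏_{i∈S} e_{H_i} and e_{cS} = ∏_{i∈S} e_{cH_i}) is well defined, and the sequence 0 → B(𝒜) →^t B(c𝒜) →^φ B(𝒜) → 0 is exact. -/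
/-!
Write `dim` for the dimension over `ℚ` and `r` for the number of regions of an arrangement.

Up to sign, a relation of family (3) is a signed boundary `∑_{k ∈ S} ε_k ∏_{i ∈ S \ k} e_i`, for a
sign pattern `ε` on `S` that occurs at no point of the space. Since `e_i² = 0`, the signed boundary
of `S` is a consequence of that of any nonempty subset, so only minimal patterns matter. Comparing
these for `𝒜` and for the cone shows that, modulo an ideal containing `e_0`, elements
`e_0, e_1, …, e_n` satisfy the relations of `B(c𝒜)` if and only if `e_1, …, e_n` satisfy those of
`B(𝒜)`. With the zero ideal of `B(𝒜)` and `e_0 = 0` this gives `φ`, with the annihilator of `e_0` in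
`B(c𝒜)` it gives `t`, and with the ideal `(e_0)` it gives `ker φ = (e_0)`, the range of `t`.

It remains to see that `t` is injective, for which `2 dim B(𝒜) ≤ dim B(c𝒜)` suffices. Deletion and
restriction give `dim B ≤ r` for every arrangement. If the arrangement is central, then also
`r ≤ dim B`: the generators `η ↦ η_i` of the algebra of functions on the set of regions, filtered by
degree, satisfy the relations of `B` in the associated graded algebra, because a sign pattern that
does not occur is missed together with its negative. Finally each region of `𝒜` gives two regions of
`c𝒜`, one on either side of `cH_0`.
-/

open MvPolynomial Set

variable {V : Type*} [NormedAddCommGroup V] [NormedSpace ℝ V] [FiniteDimensional ℝ V]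

/-- The defining linear forms of the cone `c𝒜` on `V ⊕ ℝ`: the extra hyperplane `cH₀`
has form `cω₀(v, r) = -r`, and `cHᵢ` has form `cωᵢ(v, r) = ω̄ᵢ(v) - r·aᵢ`
(where `Hᵢ = ω̄ᵢ⁻¹(aᵢ)`, i.e. `aᵢ = -ωᵢ(0)`). -/
noncomputable def coneForm {n : ℕ} (ω : Fin n → V →ᵃ[ℝ] ℝ) :
    Option (Fin n) → (V × ℝ) →ₗ[ℝ] ℝ
  | none => -LinearMap.snd ℝ V ℝ
  | some i => (ω i).linear.comp (LinearMap.fst ℝ V ℝ) + (ω i 0) • LinearMap.snd ℝ V ℝ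

/-- The hyperplane `cH j` of the cone. -/
noncomputable def cHyp {n : ℕ} (ω : Fin n → V →ᵃ[ℝ] ℝ) (j : Option (Fin n)) :
    Set (V × ℝ) := {p | coneForm ω j p = 0}

/-- The open positive half-space `cH j⁺` of the cone. -/
noncomputable def cHplus {n : ℕ} (ω : Fin n → V →ᵃ[ℝ] ℝ) (j : Option (Fin n)) :
    Set (V × ℝ) := {p | 0 < coneForm ω j p}

/-- The open negative half-space `cH j⁻` of the cone. -/
noncomputable def cHminus {n : ℕ} (ω : Fin n → V →ᵃ[ℝ] ℝ) (j : Option (Fin n)) :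
    Set (V × ℝ) := {p | coneForm ω j p < 0}

section SignedBoundary

variable {ι κ A A' : Type*} [DecidableEq ι] [DecidableEq κ] [CommRing A] [CommRing A']

/-- The signed boundary `∑_{k ∈ S} ε_k ∏_{i ∈ S \ k} y_i` of the monomial `∏_{i ∈ S} y_i`. With
`ε = 1` on `S⁺` and `ε = -1` on `S⁻`, this is the negative of the relation of family (3). -/
def signedBoundary (ε : ι → ℤˣ) (y : ι → A) (S : Finset ι) : A :=
  ∑ k ∈ S, ((ε k : ℤ) : A) * ∏ i ∈ S.erase k, y i

lemma signedBoundary_singleton (ε : ι → ℤˣ) (y : ι → A) (a : ι) :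
    signedBoundary ε y {a} = ((ε a : ℤ) : A) := by
  simp [signedBoundary]

lemma signedBoundary_union (ε : ι → ℤˣ) (y : ι → A) {S T : Finset ι} (hST : Disjoint S T) :
    signedBoundary ε y (S ∪ T) =
      signedBoundary ε y S * ∏ i ∈ T, y i + (∏ i ∈ S, y i) * signedBoundary ε y T := by
  simp only [signedBoundary, Finset.sum_union hST, Finset.sum_mul, Finset.mul_sum]
  congr 1 <;> refine Finset.sum_congr rfl fun k hk => ?_
  · rw [Finset.erase_union_distrib, Finset.erase_eq_of_notMem (Finset.disjoint_left.1 hST hk),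
      Finset.prod_union (hST.mono_left (Finset.erase_subset k S)), mul_assoc]
  · rw [Finset.erase_union_distrib, Finset.erase_eq_of_notMem (Finset.disjoint_right.1 hST hk),
      Finset.prod_union (hST.mono_right (Finset.erase_subset k T)), mul_left_comm]

lemma signedBoundary_insert (ε : ι → ℤˣ) (y : ι → A) {S : Finset ι} {a : ι} (ha : a ∉ S) :
    signedBoundary ε y (insert a S) =
      ((ε a : ℤ) : A) * ∏ i ∈ S, y i + y a * signedBoundary ε y S := by
  rw [← Finset.singleton_union, signedBoundary_union ε y (Finset.disjoint_singleton_left.2 ha),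
    signedBoundary_singleton, Finset.prod_singleton]

lemma map_signedBoundary (g : A →+* A') (ε : ι → ℤˣ) (y : ι → A) (S : Finset ι) :
    g (signedBoundary ε y S) = signedBoundary ε (fun i => g (y i)) S := by
  simp only [signedBoundary, map_sum, map_mul, map_intCast, map_prod]

lemma signedBoundary_neg (ε : ι → ℤˣ) (y : ι → A) (S : Finset ι) :
    signedBoundary (-ε) y S = -signedBoundary ε y S := by
  simp [signedBoundary]

lemma signedBoundary_map (g : ι ↪ κ) (ε : κ → ℤˣ) (y : κ → A) (S : Finset ι) :
    signedBoundary ε y (S.map g) = signedBoundary (fun i => ε (g i)) (fun i => y (g i)) S := by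
  simp only [signedBoundary, Finset.sum_map, ← Finset.map_erase, Finset.prod_map]

lemma signedBoundary_insertNone (ε : Option ι → ℤˣ) (y : Option ι → A) (S : Finset ι) :
    signedBoundary ε y S.insertNone = ((ε none : ℤ) : A) * ∏ i ∈ S, y (some i) +
      y none * signedBoundary (fun i => ε (some i)) (fun i => y (some i)) S := by
  have hS : S.insertNone = insert none (S.map Function.Embedding.some) := by
    ext (_ | i) <;> simp
  rw [hS, signedBoundary_insert ε y (by simp), Finset.prod_map, signedBoundary_map]
  rfl

lemma exists_prod_add_units_mul_eq (ε : ι → ℤˣ) (y : ι → A) (t : A) (S : Finset ι) :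
    ∃ r, ∏ i ∈ S, (y i + ((ε i : ℤ) : A) * t) =
      ∏ i ∈ S, y i + t * signedBoundary ε y S + t ^ 2 * r := by
  induction S using Finset.induction_on with
  | empty => exact ⟨0, by simp [signedBoundary]⟩
  | insert a S ha ih =>
    obtain ⟨r, hr⟩ := ih
    refine ⟨((ε a : ℤ) : A) * signedBoundary ε y S + (y a + ((ε a : ℤ) : A) * t) * r, ?_⟩
    rw [Finset.prod_insert ha, Finset.prod_insert ha, hr, signedBoundary_insert ε y ha]
    ring

lemma intUnit_mul_mem_iff (I : Ideal A) (u : ℤˣ) {a : A} : ((u : ℤ) : A) * a ∈ I ↔ a ∈ I :=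
  I.unit_mul_mem_iff_mem (u.isUnit.map (Int.castRingHom A))

variable {I : Ideal A} {y : ι → A} {ε : ι → ℤˣ} {S T : Finset ι}

lemma prod_mem_of_signedBoundary_mem (hy : ∀ i, y i ^ 2 ∈ I) (hS : S.Nonempty)
    (h : signedBoundary ε y S ∈ I) : ∏ i ∈ S, y i ∈ I := by
  obtain ⟨a, ha⟩ := hS
  have hins := signedBoundary_insert ε y (Finset.notMem_erase a S)
  rw [Finset.insert_erase ha] at hins
  rw [← Finset.mul_prod_erase S y ha, ← intUnit_mul_mem_iff I (ε a)]
  have := sub_mem (I.mul_mem_left (y a) h) (I.mul_mem_right (signedBoundary ε y (S.erase a)) (hy a))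
  convert this using 1
  rw [hins]
  ring

lemma signedBoundary_mem_of_subset (hy : ∀ i, y i ^ 2 ∈ I) (hT : T.Nonempty) (hTS : T ⊆ S)
    (h : signedBoundary ε y T ∈ I) : signedBoundary ε y S ∈ I := by
  rw [← Finset.union_sdiff_of_subset hTS, signedBoundary_union ε y Finset.disjoint_sdiff]
  exact add_mem (I.mul_mem_right _ h)
    (I.mul_mem_right _ (prod_mem_of_signedBoundary_mem hy hT h))

end SignedBoundary

section Relations

variable {ι κ W : Type*}

/-- The intersection of the zero sets `H_i = f_i⁻¹(0)`, `i ∈ S`. -/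
def flat (f : ι → W → ℝ) (S : Finset ι) : Set W := ⋂ i ∈ S, {w | f i w = 0}

/-- The set of points at which every `f_i` with `i ∈ S` has the sign `ε_i`. -/
def signCell (f : ι → W → ℝ) (ε : ι → ℤˣ) (S : Finset ι) : Set W :=
  ⋂ i ∈ S, {w | 0 < ((ε i : ℤ) : ℝ) * f i w}

lemma mem_flat {f : ι → W → ℝ} {S : Finset ι} {w : W} : w ∈ flat f S ↔ ∀ i ∈ S, f i w = 0 := by
  simp [flat]

lemma mem_signCell {f : ι → W → ℝ} {ε : ι → ℤˣ} {S : Finset ι} {w : W} :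
    w ∈ signCell f ε S ↔ ∀ i ∈ S, 0 < ((ε i : ℤ) : ℝ) * f i w := by
  simp [signCell]

lemma flat_map (g : κ ↪ ι) (f : ι → W → ℝ) (S : Finset κ) :
    flat f (S.map g) = flat (fun i => f (g i)) S := by
  ext w; simp [mem_flat]

lemma signCell_map (g : κ ↪ ι) (f : ι → W → ℝ) (ε : ι → ℤˣ) (S : Finset κ) :
    signCell f ε (S.map g) = signCell (fun i => f (g i)) (fun i => ε (g i)) S := by
  ext w; simp [mem_signCell]

variable [DecidableEq ι] [DecidableEq κ]

lemma signCell_union_eq {f : ι → W → ℝ} {ε : ι → ℤˣ} {Sp Sm : Finset ι}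
    (hp : ∀ i ∈ Sp, ε i = 1) (hm : ∀ i ∈ Sm, ε i = -1) :
    signCell f ε (Sp ∪ Sm) = (⋂ i ∈ Sp, {w | 0 < f i w}) ∩ ⋂ i ∈ Sm, {w | f i w < 0} := by
  rw [signCell, Finset.set_biInter_inter]
  congr 1 <;> refine Set.iInter₂_congr fun i hi => ?_
  · simp [hp i hi]
  · simp [hm i hi]

lemma signedBoundary_union_eq {A : Type*} [CommRing A] (y : ι → A) {ε : ι → ℤˣ} {Sp Sm : Finset ι}
    (hd : Disjoint Sp Sm) (hp : ∀ i ∈ Sp, ε i = 1) (hm : ∀ i ∈ Sm, ε i = -1) :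
    signedBoundary ε y (Sp ∪ Sm) = ∑ k ∈ Sp, ((∏ i ∈ Sp.erase k, y i) * ∏ j ∈ Sm, y j) -
      ∑ k ∈ Sm, ((∏ i ∈ Sp, y i) * ∏ j ∈ Sm.erase k, y j) := by
  rw [signedBoundary_union ε y hd, signedBoundary, signedBoundary, Finset.sum_mul, Finset.mul_sum,
    sub_eq_add_neg, ← Finset.sum_neg_distrib]
  congr 1 <;> refine Finset.sum_congr rfl fun k hk => ?_
  · simp [hp k hk]
  · simp [hm k hk]

/-- The ideal `𝓘₀` of the arrangement with hyperplanes `f_i⁻¹(0)` and half-spaces `{0 < f_i}`,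
`{f_i < 0}`. An affine arrangement and its cone are both of this form, definitionally. -/
noncomputable abbrev cordovilIdeal (f : ι → W → ℝ) : Ideal (MvPolynomial ι ℚ) :=
  bIdeal (fun i => {w | f i w = 0}) (fun i => {w | 0 < f i w}) (fun i => {w | f i w < 0})

lemma mem_bFam3_iff {f : ι → W → ℝ} {p : MvPolynomial ι ℚ} :
    p ∈ bFam3 (fun i => {w | f i w = 0}) (fun i => {w | 0 < f i w}) (fun i => {w | f i w < 0}) ↔
      ∃ S ε, signCell f ε S = ∅ ∧ (flat f S).Nonempty ∧ p = -signedBoundary ε X S := by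
  constructor
  · rintro ⟨Sp, Sm, hd, hcell, hflat, rfl⟩
    have hp : ∀ i ∈ Sp, (if i ∈ Sp then 1 else -1 : ℤˣ) = 1 := fun i hi => if_pos hi
    have hm : ∀ i ∈ Sm, (if i ∈ Sp then 1 else -1 : ℤˣ) = -1 :=
      fun i hi => if_neg (Finset.disjoint_right.1 hd hi)
    exact ⟨Sp ∪ Sm, _, (signCell_union_eq hp hm).trans hcell, Set.nonempty_iff_ne_empty.2 hflat,
      by rw [signedBoundary_union_eq X hd hp hm, neg_sub]⟩
  · rintro ⟨S, ε, hcell, hflat, rfl⟩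
    have hS := S.filter_union_filter_not_eq (ε · = 1)
    have hd := S.disjoint_filter_filter_not S (ε · = 1)
    have hp : ∀ i ∈ S.filter (ε · = 1), ε i = 1 := fun i hi => (Finset.mem_filter.1 hi).2
    have hm : ∀ i ∈ S.filter (¬ε · = 1), ε i = -1 :=
      fun i hi => (Int.units_eq_one_or _).resolve_left (Finset.mem_filter.1 hi).2
    refine ⟨_, _, hd, (signCell_union_eq hp hm).symm.trans (by rwa [hS]), ?_, ?_⟩
    · rw [hS]
      exact hflat.ne_empty
    · rw [← neg_sub, ← signedBoundary_union_eq X hd hp hm, hS]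

variable {A A' : Type*} [CommRing A] [CommRing A']

/-- The elements `y i` satisfy the defining relations (1), (2), (3) of the algebra `B` modulo the
ideal `I`. -/
structure CordovilRelations (f : ι → W → ℝ) (y : ι → A) (I : Ideal A) : Prop where
  sq_mem : ∀ i, y i ^ 2 ∈ I
  prod_mem : ∀ S, flat f S = ∅ → ∏ i ∈ S, y i ∈ I
  signedBoundary_mem : ∀ S ε, signCell f ε S = ∅ → (flat f S).Nonempty → signedBoundary ε y S ∈ I

lemma cordovilRelations_iff {f : ι → W → ℝ} {y : ι → A} {I : Ideal A} :
    CordovilRelations f y I ↔ (∀ i, y i ^ 2 ∈ I) ∧ (∀ S, flat f S = ∅ → ∏ i ∈ S, y i ∈ I) ∧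
      ∀ S ε, signCell f ε S = ∅ → (flat f S).Nonempty → signedBoundary ε y S ∈ I :=
  ⟨fun h => ⟨h.1, h.2, h.3⟩, fun h => ⟨h.1, h.2.1, h.2.2⟩⟩

lemma cordovilIdeal_le_iff {f : ι → W → ℝ} {J : Ideal (MvPolynomial ι ℚ)} :
    cordovilIdeal f ≤ J ↔ CordovilRelations f X J := by
  rw [cordovilIdeal, bIdeal, Ideal.span_le, Set.union_subset_iff, Set.union_subset_iff]
  constructor
  · rintro ⟨⟨hsq, hprod⟩, hbd⟩
    exact ⟨fun i => hsq ⟨i, rfl⟩, fun S hS => hprod ⟨S, hS, rfl⟩,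
      fun S ε hcell hflat => neg_mem_iff.1 (hbd (mem_bFam3_iff.2 ⟨S, ε, hcell, hflat, rfl⟩))⟩
  · rintro ⟨hsq, hprod, hbd⟩
    refine ⟨⟨?_, ?_⟩, ?_⟩
    · rintro _ ⟨i, rfl⟩
      exact hsq i
    · rintro _ ⟨S, hS, rfl⟩
      exact hprod S hS
    · intro p hp
      obtain ⟨S, ε, hcell, hflat, rfl⟩ := mem_bFam3_iff.1 hp
      exact neg_mem (hbd S ε hcell hflat)

namespace CordovilRelations

variable {f : ι → W → ℝ} {y : ι → A} {I : Ideal A}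

lemma comap_iff {I : Ideal A'} (g : A →+* A') :
    CordovilRelations f y (I.comap g) ↔ CordovilRelations f (fun i => g (y i)) I := by
  simp only [cordovilRelations_iff, Ideal.mem_comap, map_pow, map_prod, map_signedBoundary]

lemma mono {J : Ideal A} (h : CordovilRelations f y I) (hIJ : I ≤ J) : CordovilRelations f y J :=
  ⟨fun i => hIJ (h.sq_mem i), fun S hS => hIJ (h.prod_mem S hS),
    fun S ε hcell hflat => hIJ (h.signedBoundary_mem S ε hcell hflat)⟩

lemma comp_embedding (h : CordovilRelations f y I) (g : κ ↪ ι) :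
    CordovilRelations (fun i => f (g i)) (fun i => y (g i)) I where
  sq_mem i := h.sq_mem (g i)
  prod_mem S hS := by
    rw [← flat_map] at hS
    simpa only [Finset.prod_map] using h.prod_mem (S.map g) hS
  signedBoundary_mem S ε hcell hflat := by
    set ε' : ι → ℤˣ := Function.extend g ε 1
    have hε : (fun i => ε' (g i)) = ε := funext fun i => g.injective.extend_apply ε 1 i
    rw [← flat_map] at hflat
    rw [← hε, ← signCell_map] at hcell
    simpa only [signedBoundary_map, hε] using h.signedBoundary_mem (S.map g) ε' hcell hflat

variable [Algebra ℚ A]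

lemma aeval_mem (h : CordovilRelations f y I) {p : MvPolynomial ι ℚ} (hp : p ∈ cordovilIdeal f) :
    aeval y p ∈ I := by
  have hX : CordovilRelations f X (I.comap (aeval y : MvPolynomial ι ℚ →ₐ[ℚ] A).toRingHom) :=
    (comap_iff _).2 (by simpa using h)
  exact cordovilIdeal_le_iff.2 hX hp

end CordovilRelations

/-- The algebra `B` of the arrangement with hyperplanes `f_i⁻¹(0)`. -/
noncomputable abbrev CordovilAlg (f : ι → W → ℝ) := MvPolynomial ι ℚ ⧸ cordovilIdeal f

namespace CordovilAlg

variable (f : ι → W → ℝ)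

/-- The generator `e_i` of the algebra `B`. -/
noncomputable def gen (i : ι) : CordovilAlg f := Ideal.Quotient.mk (cordovilIdeal f) (X i)

lemma aeval_gen (p : MvPolynomial ι ℚ) : aeval (gen f) p = Ideal.Quotient.mk (cordovilIdeal f) p :=
  DFunLike.congr_fun (algHom_ext (f := aeval (gen f)) (g := Ideal.Quotient.mkₐ ℚ (cordovilIdeal f))
    fun i => aeval_X _ i) p

lemma adjoin_range_gen : Algebra.adjoin ℚ (Set.range (gen f)) = ⊤ := by
  rw [Algebra.adjoin_range_eq_range_aeval, AlgHom.range_eq_top]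
  intro a
  obtain ⟨p, rfl⟩ := Ideal.Quotient.mk_surjective a
  exact ⟨p, aeval_gen f p⟩

lemma relations_gen : CordovilRelations f (gen f) ⊥ := by
  have h := (CordovilRelations.comap_iff (f := f) (y := X) (I := ⊥)
    (Ideal.Quotient.mk (cordovilIdeal f))).1
  rw [← RingHom.ker, Ideal.mk_ker] at h
  exact h (cordovilIdeal_le_iff.1 le_rfl)

lemma gen_sq (i : ι) : gen f i ^ 2 = 0 := (relations_gen f).sq_mem i

instance finite [Finite ι] : Module.Finite ℚ (CordovilAlg f) := by
  have hint : Algebra.IsIntegral ℚ (Algebra.adjoin ℚ (Set.range (gen f))) :=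
    Algebra.IsIntegral.adjoin <| by
      rintro _ ⟨i, rfl⟩
      exact IsIntegral.of_pow two_pos (gen_sq f i ▸ isIntegral_zero)
  rw [adjoin_range_gen] at hint
  have : Algebra.IsIntegral ℚ (CordovilAlg f) :=
    ⟨fun a => (hint.isIntegral ⟨a, trivial⟩).map (⊤ : Subalgebra ℚ (CordovilAlg f)).val⟩
  exact Algebra.IsIntegral.finite

variable {f} [Algebra ℚ A] {y : ι → A} {I : Ideal A}

/-- A linear map on `A` that kills an ideal modulo which the `y i` satisfy the relations of `B`
descends, by substitution of `y i` for `e_i`, to a linear map on `B`. -/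
noncomputable def liftLinear {M : Type*} [AddCommGroup M] [Module ℚ M]
    (h : CordovilRelations f y I) (Λ : A →ₗ[ℚ] M) (hΛ : ∀ a ∈ I, Λ a = 0) :
    CordovilAlg f →ₗ[ℚ] M :=
  ((cordovilIdeal f).restrictScalars ℚ).liftQ (Λ ∘ₗ (aeval y).toLinearMap)
    fun _ hp => hΛ _ (h.aeval_mem hp)

lemma liftLinear_mk {M : Type*} [AddCommGroup M] [Module ℚ M]
    (h : CordovilRelations f y I) (Λ : A →ₗ[ℚ] M) (hΛ : ∀ a ∈ I, Λ a = 0)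
    (p : MvPolynomial ι ℚ) :
    liftLinear h Λ hΛ (Ideal.Quotient.mk (cordovilIdeal f) p) = Λ (aeval y p) := rfl

/-- The algebra map `B → A` with `e_i ↦ y i`. -/
noncomputable def lift (h : CordovilRelations f y ⊥) : CordovilAlg f →ₐ[ℚ] A :=
  Ideal.Quotient.liftₐ (cordovilIdeal f) (aeval y) fun _ hp => h.aeval_mem hp

lemma lift_mk (h : CordovilRelations f y ⊥) (p : MvPolynomial ι ℚ) :
    lift h (Ideal.Quotient.mk (cordovilIdeal f) p) = aeval y p := rfl

end CordovilAlg

end Relations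

section Circuits

variable {ι W : Type*} [DecidableEq ι] [AddCommGroup W] [Module ℝ W] {f : ι → W →ₗ[ℝ] ℝ}
  {ε : ι → ℤˣ} {S : Finset ι}

-- Otherwise moving along `w` would change `f k` at will without affecting the other signs.
lemma eq_zero_of_signCell_eq_empty {k : ι} (hS : signCell (fun i => f i) ε S = ∅)
    (hk : (signCell (fun i => f i) ε (S.erase k)).Nonempty) {w : W}
    (hw : w ∈ flat (fun i => f i) (S.erase k)) : f k w = 0 := by
  by_contra hne
  obtain ⟨u, hu⟩ := hk
  rw [mem_flat] at hw
  rw [mem_signCell] at hu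
  refine Set.eq_empty_iff_forall_notMem.1 hS (u + ((((ε k : ℤ) : ℝ) - f k u) / f k w) • w)
    (mem_signCell.2 fun i hi => ?_)
  simp only [map_add, map_smul, smul_eq_mul]
  rcases eq_or_ne i k with rfl | hik
  · rw [div_mul_cancel₀ _ hne, add_sub_cancel]
    exact_mod_cast mul_self_pos.2 (ε i).ne_zero
  · have hi' : i ∈ S.erase k := Finset.mem_erase.2 ⟨hik, hi⟩
    simpa only [hw i hi', mul_zero, add_zero] using hu i hi'

lemma exists_subset_minimal_signCell_eq_empty (hS : signCell (fun i => f i) ε S = ∅) :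
    ∃ T ⊆ S, T.Nonempty ∧ signCell (fun i => f i) ε T = ∅ ∧
      ∀ k ∈ T, ∀ w ∈ flat (fun i => f i) (T.erase k), f k w = 0 := by
  obtain ⟨T, hTS, hT⟩ :=
    exists_minimal_le_of_wellFoundedLT (fun T => signCell (fun i => f i) ε T = ∅) S hS
  refine ⟨T, hTS, ?_, hT.prop, fun k hk w hw => ?_⟩
  · rw [Finset.nonempty_iff_ne_empty]
    rintro rfl
    exact Set.eq_empty_iff_forall_notMem.1 hT.prop 0 (mem_signCell.2 (by simp))
  · refine eq_zero_of_signCell_eq_empty hT.prop (Set.nonempty_iff_ne_empty.2 fun h => ?_) hw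
    exact (Finset.erase_ssubset hk).not_subset (hT.le_of_le h (Finset.erase_subset k T))

end Circuits

section Cone

variable {W A : Type*} [NormedAddCommGroup W] [NormedSpace ℝ W] [CommRing A] {n : ℕ}
  (ω : Fin n → W →ᵃ[ℝ] ℝ)

lemma coneForm_none_apply (q : W × ℝ) : coneForm ω none q = -q.2 := rfl

lemma coneForm_some_apply (i : Fin n) (q : W × ℝ) :
    coneForm ω (some i) q = (ω i).linear q.1 + ω i 0 * q.2 := rfl

lemma coneForm_some_one (i : Fin n) (v : W) : coneForm ω (some i) (v, 1) = ω i v := by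
  rw [coneForm_some_apply, mul_one]
  exact (congrFun (ω i).decomp v).symm

lemma coneForm_some_eq_mul {q : W × ℝ} (hq : q.2 ≠ 0) (i : Fin n) :
    coneForm ω (some i) q = q.2 * ω i (q.2⁻¹ • q.1) := by
  have h : q = q.2 • (q.2⁻¹ • q.1, (1 : ℝ)) := Prod.ext (by simp [hq]) (by simp)
  conv_lhs => rw [h, map_smul, coneForm_some_one, smul_eq_mul]

lemma coneForm_some_eq_of_apply_eq_zero {i : Fin n} {p : W} (hp : ω i p = 0) (q : W × ℝ) :
    coneForm ω (some i) q = ω i (p + q.1 - q.2 • p) := by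
  have h : q = (p + q.1 - q.2 • p, (1 : ℝ)) - (1 - q.2) • (p, (1 : ℝ)) :=
    Prod.ext (by simp [sub_smul]) (by simp)
  conv_lhs => rw [h, map_sub, map_smul, coneForm_some_one, coneForm_some_one, hp, smul_zero,
    sub_zero]

variable {ω}

lemma coneForm_none_mem_span {S : Finset (Fin n)} (hS : flat (fun i => ω i) S = ∅) :
    coneForm ω none ∈ Submodule.span ℝ ((fun i => coneForm ω (some i)) '' S) := by
  rw [Set.image_eq_range]
  refine mem_span_of_iInf_ker_le_ker fun q hq => ?_
  simp only [Submodule.mem_iInf, LinearMap.mem_ker] at hq ⊢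
  rw [coneForm_none_apply, neg_eq_zero]
  by_contra hr
  refine Set.eq_empty_iff_forall_notMem.1 hS (q.2⁻¹ • q.1) (mem_flat.2 fun i hi => ?_)
  exact (mul_eq_zero_iff_left hr).1 ((coneForm_some_eq_mul ω hr i).symm.trans (hq ⟨i, hi⟩))

lemma exists_signCell_cone_insertNone_eq_empty {S : Finset (Fin n)}
    (hS : flat (fun i => ω i) S = ∅) :
    ∃ ε, signCell (fun j => coneForm ω j) ε S.insertNone = ∅ := by
  obtain ⟨d, hd⟩ :=
    (Submodule.mem_span_image_finset_iff_exists_fun' ℝ).1 (coneForm_none_mem_span hS)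
  refine ⟨fun j => j.elim 1 fun i => if 0 ≤ d i then -1 else 1,
    Set.eq_empty_iff_forall_notMem.2 fun q hq => ?_⟩
  rw [mem_signCell, Finset.forall_mem_insertNone] at hq
  obtain ⟨hnone, hsome⟩ := hq
  have hle : coneForm ω none q ≤ 0 := by
    rw [← hd, LinearMap.sum_apply]
    refine Finset.sum_nonpos fun i hi => ?_
    have hi' := hsome i hi
    rw [LinearMap.smul_apply, smul_eq_mul]
    rcases le_or_gt 0 (d i) with h | h
    · exact mul_nonpos_of_nonneg_of_nonpos h (by simpa [h] using hi'.le)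
    · exact mul_nonpos_of_nonpos_of_nonneg h.le (by simpa [h.not_ge] using hi'.le)
  exact hle.not_gt (by simpa using hnone)

lemma CordovilRelations.of_cone {y : Option (Fin n) → A} {I : Ideal A} (h0 : y none ∈ I)
    (h : CordovilRelations (fun j => coneForm ω j) y I) :
    CordovilRelations (fun i => ω i) (fun i => y (some i)) I where
  sq_mem i := h.sq_mem (some i)
  prod_mem S hS := by
    obtain ⟨ε, hε⟩ := exists_signCell_cone_insertNone_eq_empty hS
    have hbd := h.signedBoundary_mem S.insertNone ε hε ⟨0, mem_flat.2 (by simp)⟩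
    rwa [signedBoundary_insertNone, Ideal.add_mem_iff_left _ (I.mul_mem_right _ h0),
      intUnit_mul_mem_iff] at hbd
  signedBoundary_mem S ε hcell hflat := by
    obtain ⟨p, hp⟩ := hflat
    have hcone : signCell (fun i => coneForm ω (some i)) ε S = ∅ := by
      refine Set.eq_empty_iff_forall_notMem.2 fun q hq => ?_
      refine Set.eq_empty_iff_forall_notMem.1 hcell (p + q.1 - q.2 • p)
        (mem_signCell.2 fun i hi => ?_)
      rw [← coneForm_some_eq_of_apply_eq_zero ω (mem_flat.1 hp i hi)]
      exact mem_signCell.1 hq i hi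
    exact (h.comp_embedding .some).signedBoundary_mem S ε hcone ⟨0, mem_flat.2 (by simp)⟩

lemma prodMk_one_mem_flat_map_some {S : Finset (Fin n)} {v : W} :
    (v, (1 : ℝ)) ∈ flat (fun j => coneForm ω j) (S.map .some) ↔ v ∈ flat (fun i => ω i) S := by
  simp [mem_flat, coneForm_some_one]

lemma signCell_eq_empty_of_coneForm {ε : Option (Fin n) → ℤˣ} {S : Finset (Fin n)}
    (hS : signCell (fun j => coneForm ω j) ε (S.map .some) = ∅) :
    signCell (fun i => ω i) (fun i => ε (some i)) S = ∅ := by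
  refine Set.eq_empty_iff_forall_notMem.2 fun v hv => ?_
  refine Set.eq_empty_iff_forall_notMem.1 hS (v, 1) (mem_signCell.2 ?_)
  simpa [coneForm_some_one] using mem_signCell.1 hv

namespace CordovilRelations

variable {y : Option (Fin n) → A} {I : Ideal A}

lemma signedBoundary_mem_cone_of_minimal (h0 : y none ∈ I)
    (h : CordovilRelations (fun i => ω i) (fun i => y (some i)) I) {T : Finset (Option (Fin n))}
    {ε : Option (Fin n) → ℤˣ} (hcell : signCell (fun j => coneForm ω j) ε T = ∅)
    (hmin : ∀ k ∈ T, ∀ q ∈ flat (fun j => coneForm ω j) (T.erase k), coneForm ω k q = 0) :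
    signedBoundary ε y T ∈ I := by
  by_cases hT : none ∈ T
  · obtain ⟨U, rfl⟩ : ∃ U, T = Finset.insertNone U :=
      ⟨T.eraseNone, by rw [Finset.insertNone_eraseNone, Finset.insert_eq_of_mem hT]⟩
    have hU : flat (fun i => ω i) U = ∅ := by
      refine Set.eq_empty_iff_forall_notMem.2 fun v hv => ?_
      have hv' : coneForm ω none (v, 1) = 0 :=
        hmin none hT _ <| by
          rw [← Finset.map_some_eraseNone, Finset.eraseNone_insertNone]
          exact prodMk_one_mem_flat_map_some.2 hv
      simp [coneForm_none_apply] at hv'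
    rw [signedBoundary_insertNone]
    exact add_mem (I.mul_mem_left _ (h.prod_mem U hU)) (I.mul_mem_right _ h0)
  · obtain ⟨U, rfl⟩ : ∃ U, T = Finset.map .some U :=
      ⟨T.eraseNone, by rw [Finset.map_some_eraseNone, Finset.erase_eq_of_notMem hT]⟩
    rw [signedBoundary_map]
    rcases (flat (fun i => ω i) U).eq_empty_or_nonempty with hU | hU
    · refine sum_mem fun k hk => I.mul_mem_left _ (h.prod_mem (U.erase k) ?_)
      refine Set.eq_empty_iff_forall_notMem.2 fun v hv =>
        Set.eq_empty_iff_forall_notMem.1 hU v (mem_flat.2 fun i hi => ?_)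
      rcases eq_or_ne i k with rfl | hik
      · rw [← coneForm_some_one]
        refine hmin (some i) (by simpa) _ ?_
        rw [← Function.Embedding.some_apply, ← Finset.map_erase]
        exact prodMk_one_mem_flat_map_some.2 hv
      · exact mem_flat.1 hv i (Finset.mem_erase.2 ⟨hik, hi⟩)
    · exact h.signedBoundary_mem U _ (signCell_eq_empty_of_coneForm hcell) hU

lemma cone (h0 : y none ∈ I)
    (h : CordovilRelations (fun i => ω i) (fun i => y (some i)) I) :
    CordovilRelations (fun j => coneForm ω j) y I where
  sq_mem
    | none => by simpa only [sq] using I.mul_mem_left (y none) h0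
    | some i => h.sq_mem i
  prod_mem S hS := absurd hS (Set.Nonempty.ne_empty ⟨0, mem_flat.2 (by simp)⟩)
  signedBoundary_mem S ε hcell _ := by
    obtain ⟨T, hTS, hT, hTcell, hmin⟩ := exists_subset_minimal_signCell_eq_empty hcell
    refine signedBoundary_mem_of_subset ?_ hT hTS
      (h.signedBoundary_mem_cone_of_minimal h0 hTcell hmin)
    rintro (_ | i)
    · simpa only [sq] using I.mul_mem_left (y none) h0
    · exact h.sq_mem i

end CordovilRelations

end Cone

section ConeMaps

lemma exists_sub_aeval_mem {ι K A : Type*} [CommRing K] [CommRing A] [Algebra K A] [Algebra ℚ A]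
    {I : Ideal A} {s : Set A} {y : ι → A} (hs : Algebra.adjoin K s = ⊤)
    (hK : ∀ k : K, ∃ c : ℚ, algebraMap K A k - algebraMap ℚ A c ∈ I)
    (hy : ∀ a ∈ s, ∃ p : MvPolynomial ι ℚ, a - aeval y p ∈ I) (a : A) :
    ∃ p : MvPolynomial ι ℚ, a - aeval y p ∈ I := by
  have ha : a ∈ Algebra.adjoin K s := hs ▸ Algebra.mem_top
  induction ha using Algebra.adjoin_induction with
  | mem a ha => exact hy a ha
  | algebraMap k =>
    obtain ⟨c, hc⟩ := hK k
    exact ⟨C c, by rwa [aeval_C]⟩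
  | add a b _ _ ha hb =>
    obtain ⟨p, hp⟩ := ha
    obtain ⟨q, hq⟩ := hb
    exact ⟨p + q, by simpa only [map_add, add_sub_add_comm] using add_mem hp hq⟩
  | mul a b _ _ ha hb =>
    obtain ⟨p, hp⟩ := ha
    obtain ⟨q, hq⟩ := hb
    exact ⟨p * q, by simpa only [map_mul] using I.mul_sub_mul_mem hp hq⟩

lemma exists_sub_aeval_some_mem_span_gen_none {ι W : Type*} [DecidableEq ι]
    (f : Option ι → W → ℝ) (a : CordovilAlg f) :
    ∃ p : MvPolynomial ι ℚ,
      a - aeval (fun i => CordovilAlg.gen f (some i)) p ∈ Ideal.span {CordovilAlg.gen f none} := by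
  refine exists_sub_aeval_mem (CordovilAlg.adjoin_range_gen f)
    (fun c => ⟨c, by rw [sub_self]; exact zero_mem _⟩) ?_ a
  rintro _ ⟨_ | i, rfl⟩
  · exact ⟨0, by simp⟩
  · exact ⟨X i, by simp⟩

variable {W : Type*} [NormedAddCommGroup W] [NormedSpace ℝ W] {n : ℕ} (ω : Fin n → W →ᵃ[ℝ] ℝ)

/-- The map `φ : B(c𝒜) → B(𝒜)`. -/
noncomputable def coneToBase :
    CordovilAlg (fun j => coneForm ω j) →ₐ[ℚ] CordovilAlg (fun i => ω i) :=
  CordovilAlg.lift (y := fun j => j.elim 0 (CordovilAlg.gen fun i => ω i))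
    (.cone (zero_mem _) (CordovilAlg.relations_gen _))

lemma coneToBase_gen_none : coneToBase ω (CordovilAlg.gen _ none) = 0 :=
  (CordovilAlg.lift_mk _ _).trans (aeval_X _ _)

lemma coneToBase_gen_some (i : Fin n) :
    coneToBase ω (CordovilAlg.gen _ (some i)) = CordovilAlg.gen _ i :=
  (CordovilAlg.lift_mk _ _).trans (aeval_X _ _)

lemma coneToBase_aeval_gen_some (p : MvPolynomial (Fin n) ℚ) :
    coneToBase ω (aeval (fun i => CordovilAlg.gen _ (some i)) p) = Ideal.Quotient.mk _ p := by
  rw [comp_aeval_apply, ← CordovilAlg.aeval_gen]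
  simp only [coneToBase_gen_some]

lemma coneToBase_surjective : Function.Surjective (coneToBase ω) := by
  intro b
  obtain ⟨p, rfl⟩ := Ideal.Quotient.mk_surjective b
  exact ⟨_, coneToBase_aeval_gen_some ω p⟩

lemma relations_gen_some {I : Ideal (CordovilAlg fun j => coneForm ω j)}
    (hI : CordovilAlg.gen _ none ∈ I) :
    CordovilRelations (fun i => ω i) (fun i => CordovilAlg.gen _ (some i)) I :=
  .of_cone hI ((CordovilAlg.relations_gen _).mono bot_le)

lemma ker_coneToBase :
    RingHom.ker (coneToBase ω) = Ideal.span {CordovilAlg.gen (fun j => coneForm ω j) none} := by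
  have hle : Ideal.span {CordovilAlg.gen (fun j => coneForm ω j) none} ≤
      RingHom.ker (coneToBase ω) := by
    rw [Ideal.span_singleton_le_iff_mem]
    exact coneToBase_gen_none ω
  refine le_antisymm (fun a ha => ?_) hle
  obtain ⟨p, hp⟩ := exists_sub_aeval_some_mem_span_gen_none _ a
  have hker := sub_mem ha (hle hp)
  rw [sub_sub_cancel, RingHom.mem_ker, coneToBase_aeval_gen_some,
    Ideal.Quotient.eq_zero_iff_mem] at hker
  rw [← sub_add_cancel a]
  exact add_mem hp ((relations_gen_some ω (Ideal.mem_span_singleton_self _)).aeval_mem hker)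

/-- The map `t : B(𝒜) → B(c𝒜)`: substitution of `e_{cH_i}` for `e_{H_i}`, followed by
multiplication by `e_{cH_0}`. -/
noncomputable def baseToCone :
    CordovilAlg (fun i => ω i) →ₗ[ℚ] CordovilAlg (fun j => coneForm ω j) :=
  CordovilAlg.liftLinear
    (I := Ideal.torsionOf _ _ (CordovilAlg.gen (fun j => coneForm ω j) none))
    (relations_gen_some ω (by
      rw [Ideal.mem_torsionOf_iff, smul_eq_mul, ← sq, CordovilAlg.gen_sq]))
    (LinearMap.mulRight ℚ (CordovilAlg.gen _ none)) fun _ =>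
      (Ideal.mem_torsionOf_iff _ _).1

lemma baseToCone_mk (p : MvPolynomial (Fin n) ℚ) :
    baseToCone ω (Ideal.Quotient.mk _ p) =
      aeval (fun i => CordovilAlg.gen _ (some i)) p * CordovilAlg.gen _ none := rfl

lemma range_baseToCone :
    LinearMap.range (baseToCone ω) = LinearMap.ker (coneToBase ω).toLinearMap := by
  ext a
  change _ ↔ a ∈ RingHom.ker (coneToBase ω)
  rw [ker_coneToBase, Ideal.mem_span_singleton']
  constructor
  · rintro ⟨b, rfl⟩
    obtain ⟨p, rfl⟩ := Ideal.Quotient.mk_surjective b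
    exact ⟨_, (baseToCone_mk ω p).symm⟩
  · rintro ⟨b, rfl⟩
    obtain ⟨p, hp⟩ := exists_sub_aeval_some_mem_span_gen_none _ b
    obtain ⟨c, hc⟩ := Ideal.mem_span_singleton'.1 hp
    refine ⟨Ideal.Quotient.mk _ p, (baseToCone_mk ω p).trans ?_⟩
    linear_combination CordovilAlg.gen (fun j => coneForm ω j) none * hc -
      c * CordovilAlg.gen_sq (fun j => coneForm ω j) none

end ConeMaps

section Regions

open scoped Topology

variable {ι W : Type*}

/-- The regions of the arrangement, each recorded by the signs that the `f_i` take on it. -/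
def regions (f : ι → W → ℝ) : Set (ι → ℤˣ) := {ε | ∃ w, ∀ i, 0 < ((ε i : ℤ) : ℝ) * f i w}

lemma ncard_regions_comp_equiv_le {κ : Type*} [Finite ι] (e : κ ≃ ι) (f : ι → W → ℝ) :
    (regions fun k => f (e k)).ncard ≤ (regions f).ncard := by
  refine Set.ncard_le_ncard_of_injOn (fun ε i => ε (e.symm i)) ?_ ?_
  · rintro ε ⟨w, hw⟩
    exact ⟨w, fun i => by simpa using hw (e.symm i)⟩
  · exact (e.symm.surjective.injective_comp_right).injOn

/-- The regions, with the sign of `f_none` removed, that lie on the side of `f_none⁻¹(0)` given by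
the sign `s`. -/
def sideRegions (f : Option ι → W → ℝ) (s : ℤˣ) : Set (ι → ℤˣ) :=
  {ε | (fun j => Option.elim j s ε) ∈ regions f}

lemma mem_sideRegions {f : Option ι → W → ℝ} {s : ℤˣ} {ε : ι → ℤˣ} :
    ε ∈ sideRegions f s ↔
      ∃ w, 0 < ((s : ℤ) : ℝ) * f none w ∧ ∀ i, 0 < ((ε i : ℤ) : ℝ) * f (some i) w := by
  simp [sideRegions, regions, Option.forall]

lemma ncard_sideRegions_add_le [Finite ι] (f : Option ι → W → ℝ) :
    (sideRegions f 1).ncard + (sideRegions f (-1)).ncard ≤ (regions f).ncard := by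
  have hinj (s : ℤˣ) : Function.Injective fun (ε : ι → ℤˣ) j => Option.elim j s ε :=
    fun ε ε' h => funext fun i => congrFun h (some i)
  rw [← Set.ncard_image_of_injective _ (hinj 1), ← Set.ncard_image_of_injective _ (hinj (-1)),
    ← Set.ncard_union_eq]
  · refine Set.ncard_le_ncard ?_
    rintro _ (⟨ε, hε, rfl⟩ | ⟨ε, hε, rfl⟩) <;> exact hε
  · refine Set.disjoint_left.2 ?_
    rintro _ ⟨ε, -, rfl⟩ ⟨ε', -, h⟩
    have hsign : (-1 : ℤˣ) = 1 := congrFun h none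
    exact absurd hsign (by decide)

lemma exists_units_mul_pos {r : ℝ} (hr : r ≠ 0) : ∃ s : ℤˣ, 0 < ((s : ℤ) : ℝ) * r := by
  rcases hr.lt_or_gt with h | h
  · exact ⟨-1, by simpa⟩
  · exact ⟨1, by simpa⟩

/-- Values of the functions `f_i` along lines interpolate linearly, as for affine functions on an
affine space. Unlike an affine structure on `W`, this property passes to the zero set of one of
the functions without further ado. -/
def IsAffineFamily (f : ι → W → ℝ) : Prop :=
  ∀ (x y : W) (t : ℝ), ∃ w, ∀ i, f i w = AffineMap.lineMap (f i x) (f i y) t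

/-- The arrangement without the hyperplane of index `none`. -/
def deletion (f : Option ι → W → ℝ) (i : ι) : W → ℝ := f (some i)

/-- The arrangement induced on the hyperplane of index `none`. -/
def restriction (f : Option ι → W → ℝ) (i : ι) (w : {w // f none w = 0}) : ℝ := f (some i) w

lemma IsAffineFamily.comp {κ : Type*} {f : ι → W → ℝ} (hf : IsAffineFamily f) (g : κ → ι) :
    IsAffineFamily fun i => f (g i) := by
  intro x y t
  obtain ⟨w, hw⟩ := hf x y t
  exact ⟨w, fun i => hw (g i)⟩

variable {f : Option ι → W → ℝ} (hf : IsAffineFamily f)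
include hf

lemma isAffineFamily_deletion : IsAffineFamily (deletion f) := hf.comp some

lemma isAffineFamily_restriction : IsAffineFamily (restriction f) := by
  intro x y t
  obtain ⟨w, hw⟩ := hf x y t
  exact ⟨⟨w, by simp [hw none, x.2, y.2]⟩, fun i => hw (some i)⟩

lemma exists_signCell_insertNone_eq_empty {ε : ι → ℤˣ} {S : Finset ι}
    (hS : signCell (restriction f) ε S = ∅) :
    ∃ s : ℤˣ, signCell f (fun j => j.elim s ε) S.insertNone = ∅ := by
  by_contra! h
  obtain ⟨x, hx⟩ := h 1
  obtain ⟨y, hy⟩ := h (-1)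
  rw [mem_signCell, Finset.forall_mem_insertNone] at hx hy
  have hx0 : 0 < f none x := by simpa using hx.1
  have hy0 : f none y < 0 := by simpa using hy.1
  have hxy : 0 < f none x - f none y := by linarith
  set t := f none x / (f none x - f none y) with ht
  have ht0 : 0 ≤ t := by positivity
  have ht1 : 0 ≤ 1 - t := by
    rw [ht, one_sub_div hxy.ne', sub_sub_cancel_left]
    exact div_nonneg (by linarith) hxy.le
  obtain ⟨w, hw⟩ := hf x y t
  have hw0 : f none w = 0 := by
    rw [hw none, AffineMap.lineMap_apply_ring', ht]
    field_simp
    ring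
  refine Set.eq_empty_iff_forall_notMem.1 hS ⟨w, hw0⟩ (mem_signCell.2 fun i hi => ?_)
  have hcombo : ((ε i : ℤ) : ℝ) * f (some i) w =
      (1 - t) * (((ε i : ℤ) : ℝ) * f (some i) x) + t * (((ε i : ℤ) : ℝ) * f (some i) y) := by
    rw [hw (some i), AffineMap.lineMap_apply_ring]
    ring
  exact (convex_Ioi (0 : ℝ) (hx.2 i hi) (hy.2 i hi) ht1 ht0 (sub_add_cancel 1 t)).trans_eq
    hcombo.symm

variable [Finite ι]

lemma mem_sideRegions_of_eq_zero {w₀ w : W} (hw₀ : f none w₀ ≠ 0) (hw : f none w = 0) {ε : ι → ℤˣ}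
    (hε : ∀ i, 0 < ((ε i : ℤ) : ℝ) * f (some i) w) (s : ℤˣ) : ε ∈ sideRegions f s := by
  set c := ((s : ℤ) : ℝ) * f none w₀
  have hs : ((s : ℤ) : ℝ) ≠ 0 := mod_cast s.ne_zero
  have hev : ∀ᶠ τ in 𝓝[>] (0 : ℝ), ∀ i,
      0 < ((ε i : ℤ) : ℝ) * AffineMap.lineMap (f (some i) w) (f (some i) w₀) (c * τ) := by
    refine Filter.eventually_all.2 fun i => nhdsWithin_le_nhds ?_
    have hcont : Continuous fun τ : ℝ =>
        ((ε i : ℤ) : ℝ) * AffineMap.lineMap (f (some i) w) (f (some i) w₀) (c * τ) := by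
      simp only [AffineMap.lineMap_apply_ring']
      fun_prop
    exact continuousAt_const.eventually_lt hcont.continuousAt (by simpa using hε i)
  obtain ⟨τ, hτ, hτ0⟩ := (hev.and self_mem_nhdsWithin).exists
  obtain ⟨v, hv⟩ := hf w w₀ (c * τ)
  refine mem_sideRegions.2 ⟨v, ?_, fun i => by rw [hv (some i)]; exact hτ i⟩
  have hpos : ((s : ℤ) : ℝ) * f none v = τ * (c * c) := by
    rw [hv none, hw, AffineMap.lineMap_apply_ring']
    ring
  rw [hpos]
  exact mul_pos hτ0 (mul_self_pos.2 (mul_ne_zero hs hw₀))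

lemma regions_deletion_subset {w₀ : W} (hw₀ : f none w₀ ≠ 0) :
    regions (deletion f) ⊆ sideRegions f 1 ∪ sideRegions f (-1) := by
  rintro ε ⟨w, hε⟩
  by_cases hw : f none w = 0
  · exact Or.inl (mem_sideRegions_of_eq_zero hf hw₀ hw hε 1)
  · obtain ⟨s, hs⟩ := exists_units_mul_pos hw
    have hmem : ε ∈ sideRegions f s := mem_sideRegions.2 ⟨w, hs, hε⟩
    rcases Int.units_eq_one_or s with rfl | rfl
    · exact Or.inl hmem
    · exact Or.inr hmem

lemma ncard_regions_restriction_add_deletion_le {w₀ : W} (hw₀ : f none w₀ ≠ 0) :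
    (regions (restriction f)).ncard + (regions (deletion f)).ncard ≤
      (regions f).ncard := by
  have hrestr : regions (restriction f) ⊆ sideRegions f 1 ∩ sideRegions f (-1) := by
    rintro ε ⟨w, hε⟩
    exact ⟨mem_sideRegions_of_eq_zero hf hw₀ w.2 hε 1,
      mem_sideRegions_of_eq_zero hf hw₀ w.2 hε (-1)⟩
  calc (regions (restriction f)).ncard + (regions (deletion f)).ncard
      ≤ (sideRegions f 1 ∩ sideRegions f (-1)).ncard +
          (sideRegions f 1 ∪ sideRegions f (-1)).ncard :=
        add_le_add (Set.ncard_le_ncard hrestr)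
          (Set.ncard_le_ncard (regions_deletion_subset hf hw₀))
    _ = (sideRegions f 1).ncard + (sideRegions f (-1)).ncard := by
        rw [add_comm, Set.ncard_union_add_ncard_inter]
    _ ≤ (regions f).ncard := ncard_sideRegions_add_le f

end Regions

section UpperBound

open Module

variable {ι W : Type*} [DecidableEq ι]

namespace CordovilAlg

lemma subsingleton_of_isEmpty [IsEmpty W] (f : ι → W → ℝ) : Subsingleton (CordovilAlg f) := by
  refine subsingleton_of_zero_eq_one (Eq.symm ?_)
  simpa using (relations_gen f).prod_mem ∅ (Set.eq_empty_of_isEmpty _)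

lemma subsingleton_of_forall_eq_zero {f : ι → W → ℝ} {i : ι} (hi : ∀ w, f i w = 0) :
    Subsingleton (CordovilAlg f) := by
  rcases isEmpty_or_nonempty W with hW | ⟨⟨w⟩⟩
  · exact subsingleton_of_isEmpty f
  refine subsingleton_of_zero_eq_one (Eq.symm ?_)
  have hbd := (relations_gen f).signedBoundary_mem {i} 1
    (Set.eq_empty_of_forall_notMem fun w => by simp [mem_signCell, hi])
    ⟨w, mem_flat.2 (by simpa using hi w)⟩
  simpa [signedBoundary_singleton] using hbd

lemma lift_surjective {A : Type*} [CommRing A] [Algebra ℚ A] {f : ι → W → ℝ} {y : ι → A}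
    (h : CordovilRelations f y ⊥) (hy : Algebra.adjoin ℚ (Set.range y) = ⊤) :
    Function.Surjective (lift h) := by
  intro a
  obtain ⟨p, rfl⟩ : a ∈ (aeval y : MvPolynomial ι ℚ →ₐ[ℚ] A).range := by
    rw [← Algebra.adjoin_range_eq_range_aeval, hy]
    trivial
  exact ⟨_, lift_mk h p⟩

lemma finrank_le_comp_equiv {κ : Type*} [DecidableEq κ] [Finite κ] [Finite ι] (e : κ ≃ ι)
    (f : ι → W → ℝ) :
    finrank ℚ (CordovilAlg f) ≤ finrank ℚ (CordovilAlg fun k => f (e k)) := by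
  have h := (relations_gen f).comp_embedding e.toEmbedding
  refine LinearMap.finrank_le_finrank_of_surjective (f := (lift h).toLinearMap)
    (lift_surjective h ?_)
  rw [← adjoin_range_gen f]
  exact congrArg _ (e.surjective.range_comp (gen f))

end CordovilAlg

-- The ideal consists of the `d` for which `d * y none` lies in the image of `D`.
lemma CordovilRelations.restriction {A D : Type*} [CommRing A] [CommRing D] [Algebra D A]
    {f : Option ι → W → ℝ} (hf : IsAffineFamily f) {y : Option ι → A} {z : ι → D}
    (hz : ∀ i, algebraMap D A (z i) = y (some i)) (h : CordovilRelations f y ⊥) :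
    CordovilRelations (restriction f) z
      ((1 : Submodule D A).comap (LinearMap.toSpanSingleton D A (y none))) where
  sq_mem i := by
    rw [Submodule.mem_comap, LinearMap.toSpanSingleton_apply, Algebra.smul_def, map_pow, hz,
      Ideal.mem_bot.1 (h.sq_mem (some i)), zero_mul]
    exact zero_mem _
  prod_mem S hS := by
    have hflat : flat f S.insertNone = ∅ := by
      refine Set.eq_empty_of_forall_notMem fun w hw => ?_
      rw [mem_flat, Finset.forall_mem_insertNone] at hw
      exact Set.eq_empty_iff_forall_notMem.1 hS ⟨w, hw.1⟩ (mem_flat.2 hw.2)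
    have hprod := h.prod_mem _ hflat
    rw [Submodule.mem_comap, LinearMap.toSpanSingleton_apply, Algebra.smul_def, map_prod]
    simp only [hz]
    rw [mul_comm, ← Finset.prod_insertNone, Ideal.mem_bot.1 hprod]
    exact zero_mem _
  signedBoundary_mem S ε hcell hflat := by
    obtain ⟨s, hs⟩ := exists_signCell_insertNone_eq_empty hf hcell
    obtain ⟨w, hw⟩ := hflat
    have hbd := h.signedBoundary_mem _ _ hs
      ⟨w, mem_flat.2 (Finset.forall_mem_insertNone.2 ⟨w.2, fun i hi => mem_flat.1 hw i hi⟩)⟩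
    rw [signedBoundary_insertNone, Ideal.mem_bot] at hbd
    refine Submodule.mem_one.2 ⟨-(((s : ℤ) : D) * ∏ i ∈ S, z i), ?_⟩
    rw [LinearMap.toSpanSingleton_apply, Algebra.smul_def, map_signedBoundary, map_neg, map_mul,
      map_prod, map_intCast]
    simp only [hz]
    rw [mul_comm _ (y none)]
    exact neg_eq_of_add_eq_zero_right hbd

namespace CordovilAlg

/-- The map from the algebra of the deletion to that of the whole arrangement. -/
noncomputable def ofDeletion (f : Option ι → W → ℝ) :
    CordovilAlg (deletion f) →ₐ[ℚ] CordovilAlg f :=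
  lift ((relations_gen f).comp_embedding .some)

variable {f : Option ι → W → ℝ}

lemma ofDeletion_mk (p : MvPolynomial ι ℚ) :
    ofDeletion f (Ideal.Quotient.mk _ p) = aeval (fun i => gen f (some i)) p := rfl

lemma ofDeletion_gen (i : ι) : ofDeletion f (gen _ i) = gen f (some i) :=
  (ofDeletion_mk _).trans (aeval_X _ i)

lemma exists_eq_ofDeletion_add_mul (a : CordovilAlg f) :
    ∃ p q : MvPolynomial ι ℚ, a = ofDeletion f (Ideal.Quotient.mk _ p) +
      gen f none * ofDeletion f (Ideal.Quotient.mk _ q) := by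
  obtain ⟨p, hp⟩ := exists_sub_aeval_some_mem_span_gen_none f a
  obtain ⟨b, hb⟩ := Ideal.mem_span_singleton'.1 hp
  obtain ⟨q, hq⟩ := exists_sub_aeval_some_mem_span_gen_none f b
  obtain ⟨c, hc⟩ := Ideal.mem_span_singleton'.1 hq
  refine ⟨p, q, ?_⟩
  rw [ofDeletion_mk, ofDeletion_mk]
  linear_combination c * gen_sq f none - hb - gen f none * hc

lemma finrank_quotient_range_ofDeletion_le [Finite ι] (hf : IsAffineFamily f) :
    finrank ℚ (CordovilAlg f ⧸ LinearMap.range (ofDeletion f).toLinearMap) ≤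
      finrank ℚ (CordovilAlg (restriction f)) := by
  set δ := (ofDeletion f).toLinearMap
  let : Algebra (CordovilAlg (deletion f)) (CordovilAlg f) := (ofDeletion f).toRingHom.toAlgebra
  let Λ := (LinearMap.range δ).mkQ ∘ₗ LinearMap.mulLeft ℚ (gen f none) ∘ₗ δ
  have hrel := (relations_gen f).restriction hf (z := gen (deletion f)) ofDeletion_gen
  have hΛ : ∀ d ∈ (1 : Submodule (CordovilAlg (deletion f)) (CordovilAlg f)).comap
      (LinearMap.toSpanSingleton _ _ (gen f none)), Λ d = 0 := by
    intro d hd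
    obtain ⟨d', hd'⟩ := Submodule.mem_one.1 hd
    refine (Submodule.Quotient.mk_eq_zero _).2 ⟨d', ?_⟩
    exact hd'.trans (mul_comm _ _)
  refine LinearMap.finrank_le_finrank_of_surjective (f := liftLinear hrel Λ hΛ) fun b => ?_
  obtain ⟨a, rfl⟩ := Submodule.Quotient.mk_surjective _ b
  obtain ⟨p, q, rfl⟩ := exists_eq_ofDeletion_add_mul a
  refine ⟨Ideal.Quotient.mk _ q, ?_⟩
  have hp : (LinearMap.range δ).mkQ (δ (Ideal.Quotient.mk _ p)) = 0 :=
    (Submodule.Quotient.mk_eq_zero _).2 ⟨_, rfl⟩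
  rw [liftLinear_mk, aeval_gen, Submodule.Quotient.mk_add]
  exact (zero_add _).symm.trans (congrArg (· + _) hp.symm)

lemma finrank_le_restriction_add_deletion [Finite ι] (hf : IsAffineFamily f) :
    finrank ℚ (CordovilAlg f) ≤
      finrank ℚ (CordovilAlg (restriction f)) + finrank ℚ (CordovilAlg (deletion f)) := by
  rw [← Submodule.finrank_quotient_add_finrank (LinearMap.range (ofDeletion f).toLinearMap)]
  exact add_le_add (finrank_quotient_range_ofDeletion_le hf) (LinearMap.finrank_range_le _)

lemma finrank_le_one_of_isEmpty [IsEmpty ι] (f : ι → W → ℝ) : finrank ℚ (CordovilAlg f) ≤ 1 := by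
  refine finrank_le_one 1 fun a => ?_
  obtain ⟨p, rfl⟩ := Ideal.Quotient.mk_surjective a
  rw [eq_C_of_isEmpty p]
  exact ⟨p.coeff 0, (Algebra.algebraMap_eq_smul_one _).symm⟩

lemma finrank_le_ncard_regions_of_isEmpty [IsEmpty ι] (f : ι → W → ℝ) :
    finrank ℚ (CordovilAlg f) ≤ (regions f).ncard := by
  rcases isEmpty_or_nonempty W with hW | ⟨⟨w⟩⟩
  · have := subsingleton_of_isEmpty f
    exact finrank_zero_of_subsingleton.trans_le bot_le
  · exact (finrank_le_one_of_isEmpty f).trans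
      ((Set.ncard_pos).2 ⟨isEmptyElim, w, isEmptyElim⟩)

lemma finrank_le_ncard_regions [Finite ι] {f : ι → W → ℝ} (hf : IsAffineFamily f) :
    finrank ℚ (CordovilAlg f) ≤ (regions f).ncard := by
  refine Finite.induction_empty_option (P := fun ι => ∀ [Finite ι] [DecidableEq ι]
    (W : Type _) (f : ι → W → ℝ), IsAffineFamily f → finrank ℚ (CordovilAlg f) ≤ (regions f).ncard)
    ?_ ?_ ?_ ι W f hf
  · intro κ ι e ih _ _ W f hf
    classical
    have := Finite.of_equiv ι e.symm
    exact (finrank_le_comp_equiv e f).trans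
      ((ih W _ (hf.comp e)).trans (ncard_regions_comp_equiv_le e f))
  · intro _ _ W f _
    exact finrank_le_ncard_regions_of_isEmpty f
  · intro ι _ ih _ inst W f hf
    classical
    obtain rfl : inst = Option.instDecidableEq := Subsingleton.elim _ _
    by_cases h : ∃ w, f none w ≠ 0
    · obtain ⟨w, hw⟩ := h
      calc finrank ℚ (CordovilAlg f)
          ≤ finrank ℚ (CordovilAlg (restriction f)) + finrank ℚ (CordovilAlg (deletion f)) :=
            finrank_le_restriction_add_deletion hf
        _ ≤ (regions (restriction f)).ncard + (regions (deletion f)).ncard :=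
            add_le_add (ih _ _ (isAffineFamily_restriction hf))
              (ih _ _ (isAffineFamily_deletion hf))
        _ ≤ (regions f).ncard := ncard_regions_restriction_add_deletion_le hf hw
    · push Not at h
      have := subsingleton_of_forall_eq_zero h
      exact finrank_zero_of_subsingleton.trans_le bot_le

end CordovilAlg

end UpperBound

section LowerBound

open Module

lemma signedBoundary_mem_span_of_prod_eq_zero {ι A : Type*} [DecidableEq ι] [CommRing A]
    (h2 : IsUnit (2 : A)) {t : A} (ht : t ∈ nonZeroDivisors A) {y : ι → A} {ε : ι → ℤˣ}
    {S : Finset ι} (hε : ∏ i ∈ S, (y i + ((ε i : ℤ) : A) * t) = 0)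
    (hnegε : ∏ i ∈ S, (y i + (((-ε) i : ℤ) : A) * t) = 0) :
    signedBoundary ε y S ∈ Ideal.span {t} := by
  obtain ⟨r, hr⟩ := exists_prod_add_units_mul_eq ε y t S
  obtain ⟨r', hr'⟩ := exists_prod_add_units_mul_eq (-ε) y t S
  rw [hε] at hr
  rw [hnegε, signedBoundary_neg] at hr'
  have hcancel : t * (2 * signedBoundary ε y S) = t * (t * (r' - r)) := by
    linear_combination hr' - hr
  rw [← Ideal.unit_mul_mem_iff_mem _ h2, Ideal.mem_span_singleton]
  exact ⟨_, (mul_cancel_left_mem_nonZeroDivisors ht).1 hcancel⟩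

lemma finrank_polynomial_le_finrank_quotient {K M : Type*} [Field K] [AddCommGroup M]
    [Module (Polynomial K) M] [Module K M] [IsScalarTower K (Polynomial K) M]
    [Module.Free (Polynomial K) M] [Module.Finite (Polynomial K) M]
    (N : Submodule K M) [Module.Finite K (M ⧸ N)]
    (hN : ∀ m ∈ N, ∃ m', m = (Polynomial.X : Polynomial K) • m') :
    finrank (Polynomial K) M ≤ finrank K (M ⧸ N) := by
  let b := finBasis (Polynomial K) M
  have hb : LinearIndependent K fun i => N.mkQ (b i) := by
    refine Fintype.linearIndependent_iff.2 fun c hc i => ?_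
    simp only [← map_smul, ← map_sum] at hc
    obtain ⟨m, hm⟩ := hN _ ((Submodule.Quotient.mk_eq_zero N).1 hc)
    have hcoord := congrArg (fun m => (b.repr m i).coeff 0) hm
    simpa [← algebraMap_smul (Polynomial K), Polynomial.algebraMap_eq, Finsupp.single_apply]
      using hcoord
  simpa using hb.fintype_card_le_finrank

variable {ι : Type*}

/-- The function `η ↦ η_i X` on a set of sign vectors. -/
noncomputable def signFun (E : Set (ι → ℤˣ)) (i : ι) (η : E) : Polynomial ℚ :=
  ((η.1 i : ℤ) : Polynomial ℚ) * Polynomial.X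

/-- The Rees algebra of the functions on a set of sign vectors, filtered by the degree in the
coordinates `η ↦ η_i`. -/
noncomputable def reesAlg (E : Set (ι → ℤˣ)) : Subalgebra (Polynomial ℚ) (E → Polynomial ℚ) :=
  Algebra.adjoin (Polynomial ℚ) (Set.range (signFun E))

variable (E : Set (ι → ℤˣ))

/-- The generator `η ↦ η_i X` of the Rees algebra. -/
noncomputable def reesGen (i : ι) : reesAlg E :=
  ⟨signFun E i, Algebra.subset_adjoin ⟨i, rfl⟩⟩

/-- The parameter of the Rees algebra, the constant function with value `X`. -/
noncomputable def reesParam : reesAlg E := algebraMap (Polynomial ℚ) _ Polynomial.X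

lemma reesGen_apply (i : ι) (η : E) :
    (reesGen E i : E → Polynomial ℚ) η = ((η.1 i : ℤ) : Polynomial ℚ) * Polynomial.X := rfl

lemma reesParam_apply (η : E) : (reesParam E : E → Polynomial ℚ) η = Polynomial.X := rfl

lemma adjoin_range_reesGen : Algebra.adjoin (Polynomial ℚ) (Set.range (reesGen E)) = ⊤ := by
  have hrange : Set.range (reesGen E) = Subtype.val ⁻¹' Set.range (signFun E) := by
    ext a
    simp [reesGen, Subtype.ext_iff]
  rw [hrange]
  exact Algebra.adjoin_adjoin_coe_preimage

lemma reesParam_mem_nonZeroDivisors : reesParam E ∈ nonZeroDivisors (reesAlg E) := by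
  refine mem_nonZeroDivisors_iff_right.2 fun a ha => ?_
  ext1
  funext η
  have hη := congrFun (congrArg Subtype.val ha) η
  exact (mul_eq_zero.1 hη).resolve_right Polynomial.X_ne_zero

lemma reesGen_sq (i : ι) : reesGen E i ^ 2 = reesParam E ^ 2 := by
  ext1
  funext η
  change (((η.1 i : ℤ) : Polynomial ℚ) * Polynomial.X) ^ 2 = Polynomial.X ^ 2
  rcases Int.units_eq_one_or (η.1 i) with h | h <;> simp [h]

lemma exists_sub_aeval_reesGen_mem_span (a : reesAlg E) :
    ∃ p : MvPolynomial ι ℚ, a - aeval (reesGen E) p ∈ Ideal.span {reesParam E} := by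
  refine exists_sub_aeval_mem (adjoin_range_reesGen E) (fun q => ⟨q.coeff 0, ?_⟩) ?_ a
  · rw [IsScalarTower.algebraMap_apply ℚ (Polynomial ℚ) (reesAlg E), ← map_sub,
      Ideal.mem_span_singleton]
    exact map_dvd _ Polynomial.X_dvd_sub_C
  · rintro _ ⟨i, rfl⟩
    exact ⟨X i, by simp⟩

lemma prod_reesGen_add_apply (ε : ι → ℤˣ) (S : Finset ι) (η : E) :
    ((∏ i ∈ S, (reesGen E i + ((ε i : ℤ) : reesAlg E) * reesParam E) : reesAlg E) :
      E → Polynomial ℚ) η =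
      ∏ i ∈ S, (((η.1 i : ℤ) + (ε i : ℤ) : ℤ) : Polynomial ℚ) * Polynomial.X := by
  simp [reesGen_apply, reesParam_apply, add_mul]

instance finite_reesAlg [Finite E] : Module.Finite (Polynomial ℚ) (reesAlg E) :=
  inferInstanceAs (Module.Finite (Polynomial ℚ) (Subalgebra.toSubmodule (reesAlg E)))

instance free_reesAlg [Finite E] : Module.Free (Polynomial ℚ) (reesAlg E) :=
  inferInstanceAs (Module.Free (Polynomial ℚ) (Subalgebra.toSubmodule (reesAlg E)))

variable {E}

lemma prod_reesGen_add_eq_zero {ε : ι → ℤˣ} {S : Finset ι}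
    (h : ∀ η ∈ E, ∃ i ∈ S, η i = -ε i) :
    ∏ i ∈ S, (reesGen E i + ((ε i : ℤ) : reesAlg E) * reesParam E) = 0 := by
  ext1
  funext η
  obtain ⟨i, hi, hη⟩ := h η η.2
  rw [prod_reesGen_add_apply]
  exact Finset.prod_eq_zero hi (by simp [hη])

lemma ncard_le_finrank_reesAlg [Finite ι] :
    E.ncard ≤ finrank (Polynomial ℚ) (reesAlg E) := by
  classical
  have := Fintype.ofFinite ι
  have := Fintype.ofFinite E
  let v (η : E) : reesAlg E := ∏ i, (reesGen E i + ((η.1 i : ℤ) : reesAlg E) * reesParam E)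
  have hv (η : E) : (v η : E → Polynomial ℚ) =
      Pi.single η (∏ i, (((η.1 i : ℤ) + (η.1 i : ℤ) : ℤ) : Polynomial ℚ) * Polynomial.X) := by
    funext ζ
    rw [prod_reesGen_add_apply]
    rcases eq_or_ne ζ η with rfl | hζ
    · rw [Pi.single_eq_same]
    · obtain ⟨i, hi⟩ := Function.ne_iff.1 (Subtype.coe_injective.ne hζ)
      rw [Pi.single_eq_of_ne hζ]
      exact Finset.prod_eq_zero (Finset.mem_univ i)
        (by simp [Int.units_ne_iff_eq_neg.1 hi])
  have hne (η : E) :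
      ∏ i, (((η.1 i : ℤ) + (η.1 i : ℤ) : ℤ) : Polynomial ℚ) * Polynomial.X ≠ 0 :=
    Finset.prod_ne_zero_iff.2 fun i _ =>
      mul_ne_zero (by simp [← two_mul]) Polynomial.X_ne_zero
  have hli : LinearIndependent (Polynomial ℚ) v := by
    refine LinearIndependent.of_comp (reesAlg E).val.toLinearMap ?_
    rw [show (reesAlg E).val.toLinearMap ∘ v = _ from funext hv]
    exact Pi.linearIndependent_single_of_ne_zero hne
  rw [← Nat.card_coe_set_eq, Nat.card_eq_fintype_card]
  exact hli.fintype_card_le_finrank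

lemma signCell_neg_eq_empty {W : Type*} [AddCommGroup W] [Module ℝ W] {f : ι → W →ₗ[ℝ] ℝ}
    {ε : ι → ℤˣ} {S : Finset ι} (hS : signCell (fun i => f i) ε S = ∅) :
    signCell (fun i => f i) (-ε) S = ∅ := by
  refine Set.eq_empty_of_forall_notMem fun w hw => ?_
  refine Set.eq_empty_iff_forall_notMem.1 hS (-w) (mem_signCell.2 ?_)
  simpa using mem_signCell.1 hw

lemma exists_eq_neg_of_signCell_eq_empty {W : Type*} {f : ι → W → ℝ} {ε : ι → ℤˣ} {S : Finset ι}
    (hS : signCell f ε S = ∅) {η : ι → ℤˣ} (hη : η ∈ regions f) : ∃ i ∈ S, η i = -ε i := by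
  by_contra! h
  obtain ⟨w, hw⟩ := hη
  refine Set.eq_empty_iff_forall_notMem.1 hS w (mem_signCell.2 fun i hi => ?_)
  rw [← neg_neg (ε i), ← Int.units_ne_iff_eq_neg.1 (h i hi)]
  exact hw i

variable {W : Type*} [AddCommGroup W] [Module ℝ W] [DecidableEq ι] (f : ι → W →ₗ[ℝ] ℝ)

lemma cordovilRelations_reesGen :
    CordovilRelations (fun i => f i) (reesGen (regions fun i => f i))
      (Ideal.span {reesParam (regions fun i => f i)}) where
  sq_mem i := by
    rw [reesGen_sq]
    exact Ideal.pow_mem_of_mem _ (Ideal.mem_span_singleton_self _) 2 two_pos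
  prod_mem S hS := absurd hS (Set.Nonempty.ne_empty ⟨0, mem_flat.2 (by simp)⟩)
  signedBoundary_mem S ε hcell _ :=
    signedBoundary_mem_span_of_prod_eq_zero
      ((IsUnit.mk0 (2 : ℚ) two_ne_zero).map (algebraMap ℚ _)) (reesParam_mem_nonZeroDivisors _)
      (prod_reesGen_add_eq_zero fun _ => exists_eq_neg_of_signCell_eq_empty hcell)
      (prod_reesGen_add_eq_zero fun _ =>
        exists_eq_neg_of_signCell_eq_empty (signCell_neg_eq_empty hcell))

lemma ncard_regions_le_finrank [Finite ι] :
    (regions fun i => f i).ncard ≤ finrank ℚ (CordovilAlg fun i => f i) := by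
  set E := regions fun i => f i
  let N := (Ideal.span {reesParam E}).restrictScalars ℚ
  let Λ := CordovilAlg.liftLinear (cordovilRelations_reesGen f) N.mkQ
    fun a ha => (Submodule.Quotient.mk_eq_zero N).2 ha
  have hΛ : Function.Surjective Λ := fun b => by
    obtain ⟨a, rfl⟩ := N.mkQ_surjective b
    obtain ⟨p, hp⟩ := exists_sub_aeval_reesGen_mem_span E a
    exact ⟨Ideal.Quotient.mk _ p, ((Submodule.Quotient.eq N).2 hp).symm⟩
  have := Module.Finite.of_surjective Λ hΛ
  calc E.ncard ≤ finrank (Polynomial ℚ) (reesAlg E) := ncard_le_finrank_reesAlg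
    _ ≤ finrank ℚ (reesAlg E ⧸ N) := by
      refine finrank_polynomial_le_finrank_quotient N fun a ha => ?_
      obtain ⟨b, rfl⟩ := Ideal.mem_span_singleton.1 ha
      exact ⟨b, (Algebra.smul_def _ b).symm⟩
    _ ≤ finrank ℚ (CordovilAlg fun i => f i) := LinearMap.finrank_le_finrank_of_surjective hΛ

end LowerBound

section Exactness

open Module

lemma injective_of_range_eq_ker_of_two_mul_finrank_le {K M N : Type*} [DivisionRing K]
    [AddCommGroup M] [Module K M] [Module.Finite K M] [AddCommGroup N] [Module K N]
    [Module.Finite K N] {t : M →ₗ[K] N} {φ : N →ₗ[K] M} (hφ : Function.Surjective φ)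
    (h : LinearMap.range t = LinearMap.ker φ) (hle : 2 * finrank K M ≤ finrank K N) :
    Function.Injective t := by
  have ht := t.finrank_range_add_finrank_ker
  have hφ' := φ.finrank_range_add_finrank_ker
  rw [LinearMap.range_eq_top.2 hφ, finrank_top, ← h] at hφ'
  exact LinearMap.ker_eq_bot.1 (Submodule.finrank_eq_zero.1 (by lia))

variable {W : Type*} [NormedAddCommGroup W] [NormedSpace ℝ W] {n : ℕ} (ω : Fin n → W →ᵃ[ℝ] ℝ)

lemma isAffineFamily_affineMap {ι : Type*} (f : ι → W →ᵃ[ℝ] ℝ) :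
    IsAffineFamily fun i => f i :=
  fun x y t => ⟨AffineMap.lineMap x y t, fun i => (f i).apply_lineMap x y t⟩

lemma regions_subset_sideRegions_neg_one :
    (regions fun i => ω i) ⊆ sideRegions (fun j => coneForm ω j) (-1) := by
  rintro ε ⟨w, hw⟩
  exact mem_sideRegions.2
    ⟨(w, 1), by simp [coneForm_none_apply], fun i => by simpa [coneForm_some_one] using hw i⟩

lemma neg_mem_sideRegions_one {ε : Fin n → ℤˣ} (hε : ε ∈ regions fun i => ω i) :
    -ε ∈ sideRegions (fun j => coneForm ω j) 1 := by
  obtain ⟨w, hw⟩ := hε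
  refine mem_sideRegions.2 ⟨-(w, 1), by simp [coneForm_none_apply], fun i => ?_⟩
  simpa only [map_neg, coneForm_some_one, Pi.neg_apply, Units.val_neg, Int.cast_neg, neg_mul_neg]
    using hw i

lemma two_mul_ncard_regions_le :
    2 * (regions fun i => ω i).ncard ≤ (regions fun j => coneForm ω j).ncard := by
  rw [two_mul]
  refine le_trans (add_le_add ?_ ?_) (ncard_sideRegions_add_le _)
  · exact Set.ncard_le_ncard_of_injOn _ (fun _ => neg_mem_sideRegions_one ω) neg_injective.injOn
  · exact Set.ncard_le_ncard (regions_subset_sideRegions_neg_one ω)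

lemma two_mul_finrank_le_finrank_cone :
    2 * finrank ℚ (CordovilAlg fun i => ω i) ≤ finrank ℚ (CordovilAlg fun j => coneForm ω j) :=
  calc 2 * finrank ℚ (CordovilAlg fun i => ω i)
      ≤ 2 * (regions fun i => ω i).ncard :=
        Nat.mul_le_mul_left 2 (CordovilAlg.finrank_le_ncard_regions (isAffineFamily_affineMap ω))
    _ ≤ (regions fun j => coneForm ω j).ncard := two_mul_ncard_regions_le ω
    _ ≤ finrank ℚ (CordovilAlg fun j => coneForm ω j) := ncard_regions_le_finrank (coneForm ω)

lemma baseToCone_injective : Function.Injective (baseToCone ω) :=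
  injective_of_range_eq_ker_of_two_mul_finrank_le (coneToBase_surjective ω) (range_baseToCone ω)
    (two_mul_finrank_le_finrank_cone ω)

lemma baseToCone_prod (S : Finset (Fin n)) :
    baseToCone ω (Ideal.Quotient.mk _ (∏ i ∈ S, X i)) =
      Ideal.Quotient.mk _ (X none * ∏ i ∈ S, X (some i)) := by
  rw [baseToCone_mk, map_prod, map_mul, map_prod, mul_comm]
  simp only [aeval_X, CordovilAlg.gen]

end Exactness

theorem bAlg_cone_exact_sequence_general {W : Type*} [NormedAddCommGroup W] [NormedSpace ℝ W]
    {n : ℕ} (ω : Fin n → W →ᵃ[ℝ] ℝ) :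
    ∃ φ : BAlg (cHyp ω) (cHplus ω) (cHminus ω) →ₐ[ℚ]
        BAlg (Hyp ω) (Hplus ω) (Hminus ω),
      (∀ i : Fin n,
          φ (Ideal.Quotient.mk (bIdeal (cHyp ω) (cHplus ω) (cHminus ω)) (X (some i))) =
            Ideal.Quotient.mk (bIdeal (Hyp ω) (Hplus ω) (Hminus ω)) (X i)) ∧
      φ (Ideal.Quotient.mk (bIdeal (cHyp ω) (cHplus ω) (cHminus ω)) (X none)) = 0 ∧
      ∃ t : BAlg (Hyp ω) (Hplus ω) (Hminus ω) →ₗ[ℚ]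
          BAlg (cHyp ω) (cHplus ω) (cHminus ω),
        (∀ S : Finset (Fin n),
            t (Ideal.Quotient.mk (bIdeal (Hyp ω) (Hplus ω) (Hminus ω)) (∏ i ∈ S, X i)) =
              Ideal.Quotient.mk (bIdeal (cHyp ω) (cHplus ω) (cHminus ω))
                (X none * ∏ i ∈ S, X (some i))) ∧
        Function.Injective t ∧
        LinearMap.range t = LinearMap.ker φ.toLinearMap ∧
        Function.Surjective φ :=
  ⟨coneToBase ω, coneToBase_gen_some ω, coneToBase_gen_none ω, baseToCone ω, baseToCone_prod ω,
    baseToCone_injective ω, range_baseToCone ω, coneToBase_surjective ω⟩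

/-- The algebra map `φ : B(c𝒜) → B(𝒜)` with `e_{cHᵢ} ↦ e_{Hᵢ}`,
`e_{cH₀} ↦ 0` is well defined, the linear map `t : B(𝒜) → B(c𝒜)` with
`e_S ↦ e_{cH₀}·e_{cS}` on monomials is well defined, and
`0 → B(𝒜) →ᵗ B(c𝒜) →^φ B(𝒜) → 0` is exact. -/
theorem bAlg_cone_exact_sequence {n : ℕ} (ω : Fin n → V →ᵃ[ℝ] ℝ)
    (hω : ∀ i, (ω i).linear ≠ 0) :
    ∃ φ : BAlg (cHyp ω) (cHplus ω) (cHminus ω) →ₐ[ℚ]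
        BAlg (Hyp ω) (Hplus ω) (Hminus ω),
      (∀ i : Fin n,
          φ (Ideal.Quotient.mk (bIdeal (cHyp ω) (cHplus ω) (cHminus ω)) (X (some i))) =
            Ideal.Quotient.mk (bIdeal (Hyp ω) (Hplus ω) (Hminus ω)) (X i)) ∧
      φ (Ideal.Quotient.mk (bIdeal (cHyp ω) (cHplus ω) (cHminus ω)) (X none)) = 0 ∧
      ∃ t : BAlg (Hyp ω) (Hplus ω) (Hminus ω) →ₗ[ℚ]
          BAlg (cHyp ω) (cHplus ω) (cHminus ω),
        (∀ S : Finset (Fin n),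
            t (Ideal.Quotient.mk (bIdeal (Hyp ω) (Hplus ω) (Hminus ω)) (∏ i ∈ S, X i)) =
              Ideal.Quotient.mk (bIdeal (cHyp ω) (cHplus ω) (cHminus ω))
                (X none * ∏ i ∈ S, X (some i))) ∧
        Function.Injective t ∧
        LinearMap.range t = LinearMap.ker φ.toLinearMap ∧
        Function.Surjective φ := by
  exact bAlg_cone_exact_sequence_general ω
end
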